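/- arXiv:2108.00711 — 2 statements merged into one kernel-verified Lean document; each statement's English description precedes it below -/
import Mathlib

section
/- In the Nehari setting, let Ψ be the restriction to the unit sphere S = {w ∈ H¹(V) : ‖w‖ = 1} of Ψ̂(w) = Φ(m̂(w)), where m̂(w) = s_w w and m = m̂|_S. Then Ψ is C¹ on S (as a Banach submanifold of H¹(V)) and Ψ'(w)z = ‖m(w)‖ · Φ'(m(w))z for all w ∈ S and all z in the tangent space T_wS = {z ∈ H¹(V) : ⟨w,z⟩ = 0}. -/
open scoped ENNReal

noncomputable section

/-- `H¹(V)`: as a set, the ℓ²-summable real functions on the vertex set;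
the `H¹` norm is equivalent to the ℓ² norm by the uniform degree bound. -/
abbrev H1 (Vtx : Type*) := lp (fun _ : Vtx => ℝ) 2

variable {Vtx : Type*}

/-- `Γ(u,v)(x) = (1/2) Σ_{y∼x} (u(y)-u(x))(v(y)-v(x))`. -/
def gammaProd (adj : Vtx → Vtx → Prop) (u v : Vtx → ℝ) (x : Vtx) : ℝ :=
  (1/2) * ∑' y : {y : Vtx // adj x y}, (u y.1 - u x) * (v y.1 - v x)

/-- `|∇u|²(x) = (1/2) Σ_{y∼x} (u(y)-u(x))²`. -/
def gradSq (adj : Vtx → Vtx → Prop) (u : Vtx → ℝ) (x : Vtx) : ℝ :=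
  gammaProd adj u u x

/-- `Δu(x) = Σ_{y∼x} (u(y)-u(x))`. -/
def graphLap (adj : Vtx → Vtx → Prop) (u : Vtx → ℝ) (x : Vtx) : ℝ :=
  ∑' y : {y : Vtx // adj x y}, (u y.1 - u x)

/-- the norm `‖u‖` induced by the potential `V`:
`‖u‖² = Σ_x (|∇u|²(x) + V(x)u(x)²)`. -/
def nrmV (adj : Vtx → Vtx → Prop) (Vp : Vtx → ℝ) (u : Vtx → ℝ) : ℝ :=
  Real.sqrt (∑' x, (gradSq adj u x + Vp x * (u x)^2))

/-- the `V`-norm of an element of `H¹`. -/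
def nrmH (adj : Vtx → Vtx → Prop) (Vp : Vtx → ℝ) (u : H1 Vtx) : ℝ :=
  nrmV adj Vp (fun y => u y)

/-- `⟨u,v⟩ = Σ_x (Γ(u,v)(x) + V(x)u(x)v(x))`. -/
def iprodH (adj : Vtx → Vtx → Prop) (Vp : Vtx → ℝ) (u v : H1 Vtx) : ℝ :=
  ∑' x, (gammaProd adj (fun y => u y) (fun y => v y) x + Vp x * u x * v x)

/-- the variational functional `Φ(u) = ½‖u‖² − Σ_x F(x,u(x))`. -/
def PhiF (adj : Vtx → Vtx → Prop) (Vp : Vtx → ℝ) (F : Vtx → ℝ → ℝ) (u : H1 Vtx) : ℝ :=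
  (1/2) * ∑' x, (gradSq adj (fun y => u y) x + Vp x * (u x)^2) - ∑' x, F x (u x)

/-- the Nehari manifold `N = {u ∈ H¹\{0} : Φ'(u)u = 0}`. -/
def Nehari (adj : Vtx → Vtx → Prop) (Vp : Vtx → ℝ) (F : Vtx → ℝ → ℝ) : Set (H1 Vtx) :=
  {u | u ≠ 0 ∧ fderiv ℝ (PhiF adj Vp F) u u = 0}

/-- adjacency of the lattice graph `ℤ^N`. -/
def adjZ (N : ℕ) (x y : Fin N → ℤ) : Prop := (∑ i, (x i - y i).natAbs) = 1

end

/-!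
Along each ray the derivative of `t ↦ Φ (t • w)` divided by `t` is strictly decreasing, so the
fibering map increases up to `s w` and decreases afterwards. Hence `s` is continuous, and comparing
the maxima over neighbouring rays sandwiches the increment of `v ↦ Φ (s v • v)` between two
functions with the same derivative `s w • Φ' (s w • w)`; this gives a `C¹` reduced functional
although `s` itself need not be differentiable. That `Φ` is `C¹` rests on the continuity of the
superposition operator `u ↦ f(·, u)` on `ℓ²`: off a finite set of vertices it is dominated by the
tail of its argument.
-/

section UnimodalFibers

open Filter Topology Asymptotics Set

theorem hasFDerivAt_of_le_of_le {E : Type*} [NormedAddCommGroup E] [NormedSpace ℝ E]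
    {f g h : E → ℝ} {g' : E →L[ℝ] ℝ} {a : E} (hf : HasFDerivAt f g' a) (hh : HasFDerivAt h g' a)
    (hfg : ∀ᶠ x in 𝓝 a, f x ≤ g x) (hgh : ∀ᶠ x in 𝓝 a, g x ≤ h x)
    (hfa : f a = g a) (hha : h a = g a) : HasFDerivAt g g' a := by
  rw [hasFDerivAt_iff_isLittleO] at hf hh ⊢
  refine IsLittleO.of_bound fun c hc => ?_
  filter_upwards [hf.bound hc, hh.bound hc, hfg, hgh] with x hfx hhx hfgx hghx
  rw [Real.norm_eq_abs, abs_le] at hfx hhx ⊢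
  constructor <;> linarith [hfx.1, hhx.2]

theorem hasFDerivAt_sub_smul_of_hasStrictFDerivAt {E : Type*} [NormedAddCommGroup E]
    [NormedSpace ℝ E] {Φ : E → ℝ} {Φ' : E →L[ℝ] ℝ} {s : E → ℝ} {w : E}
    (hΦ : HasStrictFDerivAt Φ Φ' (s w • w)) (hs : ContinuousAt s w) :
    HasFDerivAt (fun v => Φ (s v • v) - Φ (s v • w)) (s w • Φ') w := by
  have hs_one : s =O[𝓝 w] fun _ => (1 : ℝ) := hs.isBigO_one ℝ
  have hs_sub : (fun v => s v - s w) =o[𝓝 w] fun _ => (1 : ℝ) :=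
    (isLittleO_one_iff ℝ).2 (tendsto_sub_nhds_zero_iff.2 hs)
  have hpair : Tendsto (fun v => (s v • v, s v • w)) (𝓝 w) (𝓝 (s w • w, s w • w)) :=
    (hs.smul continuousAt_id).prodMk_nhds (hs.smul continuousAt_const)
  have hdiff : (fun v => s v • v - s v • w) =O[𝓝 w] fun v => v - w := by
    simpa only [smul_sub, one_smul] using hs_one.smul (isBigO_refl (fun v => v - w) (𝓝 w))
  have hremainder : (fun v => Φ (s v • v) - Φ (s v • w) - Φ' (s v • v - s v • w))
      =o[𝓝 w] fun v => v - w :=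
    (hΦ.isLittleO.comp_tendsto hpair).trans_isBigO hdiff
  have hscale : (fun v => (s v - s w) • Φ' (v - w)) =o[𝓝 w] fun v => v - w := by
    simpa only [one_smul] using hs_sub.smul_isBigO (Φ'.isBigO_sub (𝓝 w) w) |>.trans_isBigO
      (by simpa only [one_smul] using isBigO_refl _ _)
  rw [hasFDerivAt_iff_isLittleO]
  refine (hremainder.add hscale).congr_left fun v => ?_
  simp only [← smul_sub, map_smul, smul_apply, smul_eq_mul]
  ring

theorem strictMonoOn_Ioc_of_strictAntiOn_div {φ φ' : ℝ → ℝ} {σ : ℝ}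
    (hφ : ∀ t, 0 < t → HasDerivAt φ (φ' t) t) (hanti : StrictAntiOn (fun t => φ' t / t) (Ioi 0))
    (hσ : φ' σ = 0) : StrictMonoOn φ (Ioc 0 σ) := by
  refine strictMonoOn_of_deriv_pos (convex_Ioc 0 σ)
    (fun t ht => (hφ t ht.1).continuousAt.continuousWithinAt) fun t ht => ?_
  rw [interior_Ioc] at ht
  have hdiv : φ' σ / σ < φ' t / t := hanti ht.1 (ht.1.trans ht.2) ht.2
  rw [hσ, zero_div] at hdiv
  exact (hφ t ht.1).deriv ▸ (div_pos_iff_of_pos_right ht.1).1 hdiv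

theorem strictAntiOn_Ici_of_strictAntiOn_div {φ φ' : ℝ → ℝ} {σ : ℝ}
    (hφ : ∀ t, 0 < t → HasDerivAt φ (φ' t) t) (hanti : StrictAntiOn (fun t => φ' t / t) (Ioi 0))
    (hσpos : 0 < σ) (hσ : φ' σ = 0) : StrictAntiOn φ (Ici σ) := by
  refine strictAntiOn_of_deriv_neg (convex_Ici σ)
    (fun t ht => (hφ t (hσpos.trans_le ht)).continuousAt.continuousWithinAt) fun t ht => ?_
  rw [interior_Ici] at ht
  have ht0 : 0 < t := hσpos.trans ht
  have hdiv : φ' t / t < φ' σ / σ := hanti hσpos ht0 ht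
  rw [hσ, zero_div] at hdiv
  rw [(hφ t ht0).deriv]
  simpa only [zero_mul] using (div_lt_iff₀ ht0).1 hdiv

/-- Every fibering map `t ↦ Φ (t • w)`, `w ≠ 0`, increases strictly up to `t = s w > 0` and
decreases strictly afterwards, so that `s w • w` is the projection of `w` to the Nehari
manifold. -/
structure HasUnimodalFibers {E : Type*} [Zero E] [SMul ℝ E] (Φ : E → ℝ) (s : E → ℝ) : Prop where
  pos : ∀ w, w ≠ 0 → 0 < s w
  strictMonoOn : ∀ w, w ≠ 0 → StrictMonoOn (fun t : ℝ => Φ (t • w)) (Ioc 0 (s w))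
  strictAntiOn : ∀ w, w ≠ 0 → StrictAntiOn (fun t : ℝ => Φ (t • w)) (Ici (s w))

namespace HasUnimodalFibers

theorem apply_smul_le {E : Type*} [Zero E] [SMul ℝ E] {Φ s : E → ℝ}
    (h : HasUnimodalFibers Φ s) {w : E} (hw : w ≠ 0) {t : ℝ} (ht : 0 < t) :
    Φ (t • w) ≤ Φ (s w • w) := by
  rcases le_total t (s w) with hle | hle
  · exact (h.strictMonoOn w hw).monotoneOn ⟨ht, hle⟩ ⟨h.pos w hw, le_rfl⟩ hle
  · exact (h.strictAntiOn w hw).antitoneOn self_mem_Ici hle hle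

-- The strict inequalities between `Φ (s w • w)` and `Φ (t • w)` at a fixed `t ≠ s w` persist for
-- nearby directions, and unimodality then places `s v` on the correct side of `t`.
theorem continuousAt {E : Type*} [Zero E] [SMul ℝ E] [TopologicalSpace E] [T1Space E]
    [ContinuousConstSMul ℝ E] {Φ s : E → ℝ} (h : HasUnimodalFibers Φ s) (hΦ : Continuous Φ)
    {w : E} (hw : w ≠ 0) : ContinuousAt s w := by
  have hray (t : ℝ) : ContinuousAt (fun v => Φ (t • v)) w :=
    (hΦ.comp (continuous_const_smul t)).continuousAt
  have hne : ∀ᶠ v in 𝓝 w, v ≠ 0 := isOpen_ne.mem_nhds hw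
  refine tendsto_order.2 ⟨fun b hb => ?_, fun b hb => ?_⟩
  · obtain ⟨c, hbc, hcw⟩ := exists_between (max_lt hb (h.pos w hw))
    have hc : 0 < c := (le_max_right b 0).trans_lt hbc
    have hlt : Φ (c • w) < Φ (s w • w) :=
      h.strictMonoOn w hw ⟨hc, hcw.le⟩ ⟨h.pos w hw, le_rfl⟩ hcw
    filter_upwards [hne, (hray c).eventually_lt (hray (s w)) hlt] with v hv hvlt
    by_contra! hle
    have hsc : s v ≤ c := hle.trans ((le_max_left b 0).trans hbc.le)
    exact hvlt.not_gt (h.strictAntiOn v hv hsc (hsc.trans hcw.le) hcw)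
  · have hlt : Φ (b • w) < Φ (s w • w) := h.strictAntiOn w hw self_mem_Ici hb.le hb
    filter_upwards [hne, (hray b).eventually_lt (hray (s w)) hlt] with v hv hvlt
    by_contra! hle
    exact hvlt.not_gt
      (h.strictMonoOn v hv ⟨h.pos w hw, hb.le.trans hle⟩ ⟨(h.pos w hw).trans hb, hle⟩ hb)

variable {E : Type*} [NormedAddCommGroup E] [NormedSpace ℝ E] {Φ s : E → ℝ}

theorem of_strictAntiOn_fderiv (hΦ : Differentiable ℝ Φ)
    (hanti : ∀ w, w ≠ 0 → StrictAntiOn (fun t : ℝ => fderiv ℝ Φ (t • w) w / t) (Ioi 0))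
    (hpos : ∀ w, w ≠ 0 → 0 < s w)
    (hcrit : ∀ w, w ≠ 0 → fderiv ℝ Φ (s w • w) (s w • w) = 0) : HasUnimodalFibers Φ s := by
  have hray (w : E) (t : ℝ) : HasDerivAt (fun t : ℝ => Φ (t • w)) (fderiv ℝ Φ (t • w) w) t := by
    have hsmul : HasDerivAt (fun t : ℝ => t • w) w t := by
      simpa only [id_eq, one_smul] using (hasDerivAt_id t).smul_const w
    exact (hΦ (t • w)).hasFDerivAt.comp_hasDerivAt t hsmul
  have hzero (w : E) (hw : w ≠ 0) : fderiv ℝ Φ (s w • w) w = 0 := by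
    simpa only [map_smul, smul_eq_zero, (hpos w hw).ne', false_or] using hcrit w hw
  exact
    { pos := hpos
      strictMonoOn := fun w hw =>
        strictMonoOn_Ioc_of_strictAntiOn_div (fun t _ => hray w t) (hanti w hw) (hzero w hw)
      strictAntiOn := fun w hw => strictAntiOn_Ici_of_strictAntiOn_div (fun t _ => hray w t)
        (hanti w hw) (hpos w hw) (hzero w hw) }

-- Maximality at `s v` and at `s w` sandwiches the increment of `v ↦ Φ (s v • v)` between those of
-- `Φ` along the segments `s w • [w, v]` and `s v • [w, v]`, so `s` need not be differentiable.
theorem hasFDerivAt (h : HasUnimodalFibers Φ s) (hΦ : ContDiff ℝ 1 Φ) {w : E} (hw : w ≠ 0) :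
    HasFDerivAt (fun v => Φ (s v • v)) (s w • fderiv ℝ Φ (s w • w)) w := by
  have hstrict : HasStrictFDerivAt Φ (fderiv ℝ Φ (s w • w)) (s w • w) :=
    hΦ.contDiffAt.hasStrictFDerivAt one_ne_zero
  have hlower : HasFDerivAt (fun v => Φ (s w • v)) (s w • fderiv ℝ Φ (s w • w)) w :=
    (hstrict.hasFDerivAt.comp w ((hasFDerivAt_id w).const_smul (s w))).congr_fderiv (by ext; simp)
  have hupper : HasFDerivAt (fun v => Φ (s w • w) + (Φ (s v • v) - Φ (s v • w)))
      (s w • fderiv ℝ Φ (s w • w)) w :=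
    (hasFDerivAt_sub_smul_of_hasStrictFDerivAt hstrict
      (h.continuousAt hΦ.continuous hw)).const_add _
  have hne : ∀ᶠ v in 𝓝 w, v ≠ 0 := isOpen_ne.mem_nhds hw
  refine hasFDerivAt_of_le_of_le hlower hupper ?_ ?_ rfl (by ring)
  · filter_upwards [hne] with v hv using h.apply_smul_le hv (h.pos w hw)
  · filter_upwards [hne] with v hv
    linarith [h.apply_smul_le hw (h.pos v hv)]

theorem contDiffOn (h : HasUnimodalFibers Φ s) (hΦ : ContDiff ℝ 1 Φ) :
    ContDiffOn ℝ 1 (fun v => Φ (s v • v)) {w | w ≠ 0} := by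
  have hderiv_cont : ContinuousOn (fun w => s w • fderiv ℝ Φ (s w • w)) {w | w ≠ 0} := fun w hw =>
    have hs : ContinuousAt s w := h.continuousAt hΦ.continuous hw
    (hs.smul ((hΦ.continuous_fderiv one_ne_zero).continuousAt.comp
      (hs.smul continuousAt_id))).continuousWithinAt
  rw [← zero_add 1, contDiffOn_succ_iff_fderiv_of_isOpen isOpen_ne, contDiffOn_zero]
  exact ⟨fun w hw => (h.hasFDerivAt hΦ hw).differentiableAt.differentiableWithinAt, by simp,
    hderiv_cont.congr fun w hw => (h.hasFDerivAt hΦ hw).fderiv⟩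

end HasUnimodalFibers

end UnimodalFibers

section Superposition

open Filter Topology
open scoped NNReal

variable {ι : Type*} {E G : ι → Type*} [∀ x, NormedAddCommGroup (E x)]
  [∀ x, NormedAddCommGroup (G x)] {p : ℝ≥0∞} {f : ∀ x, E x → G x}

theorem lp_norm_le_mul_norm [Fact (1 ≤ p)] {u : lp E p} {v : lp G p} {M : ℝ≥0}
    (h : ∀ x, ‖u x‖ ≤ M * ‖v x‖) : ‖u‖ ≤ M * ‖v‖ := by
  have hp : p ≠ 0 := (zero_lt_one.trans_le Fact.out).ne'
  calc ‖u‖ ≤ ‖(M : ℝ) • lp.toNorm v‖ := lp.norm_mono hp fun x => by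
        simpa [lp.toNorm] using h x
    _ = M * ‖v‖ := by rw [lp.norm_const_smul hp, lp.norm_toNorm, NNReal.norm_eq]

section Tail

variable [DecidableEq ι]

/-- The part of an `ℓᵖ` family supported off the finite set `A`; for `p < ∞` its norm tends to `0`
as `A` grows. -/
noncomputable def lpTail (A : Finset ι) (u : lp E p) : lp E p :=
  u - ∑ x ∈ A, lp.single p x (u x)

theorem lpTail_apply (A : Finset ι) (u : lp E p) (x : ι) :
    lpTail A u x = if x ∈ A then 0 else u x := by
  rw [lpTail, lp.coeFn_sub, Pi.sub_apply, lp.coeFn_sum, Finset.sum_apply]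
  simp only [lp.coeFn_single, Finset.sum_pi_single]
  split_ifs <;> simp

theorem continuous_lpTail [Fact (1 ≤ p)] (A : Finset ι) :
    Continuous (lpTail A : lp E p → lp E p) :=
  continuous_id.sub <| continuous_finsetSum A fun x _ =>
    (lp.isometry_single x).continuous.comp (lp.lipschitzWith_one_eval p x).continuous

theorem tendsto_lpTail [Fact (1 ≤ p)] (hp : p ≠ ∞) (u : lp E p) :
    Tendsto (fun A => lpTail A u) atTop (𝓝 0) :=
  sub_self u ▸ (tendsto_const_nhds.sub (lp.hasSum_single hp u) :)

theorem norm_apply_le_norm_lpTail [Fact (1 ≤ p)] {A : Finset ι} (u : lp E p) {x : ι}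
    (hx : x ∉ A) : ‖u x‖ ≤ ‖lpTail A u‖ := by
  simpa only [lpTail_apply, hx, if_false] using
    lp.norm_apply_le_norm (zero_lt_one.trans_le Fact.out).ne' (lpTail A u) x

end Tail

/-- `f x t = O(t)` as `t → 0`, uniformly in `x`: the condition under which `f` induces a
superposition operator between `ℓᵖ` spaces. -/
def IsUniformBigOAtZero (f : ∀ x, E x → G x) : Prop :=
  ∃ M : ℝ≥0, ∃ δ > 0, ∀ x t, ‖t‖ < δ → ‖f x t‖ ≤ M * ‖t‖

namespace IsUniformBigOAtZero

variable [Fact (1 ≤ p)]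

theorem memℓp_comp (hf : IsUniformBigOAtZero f) (hp : p ≠ ∞) (u : lp E p) :
    Memℓp (fun x => f x (u x)) p := by
  classical
  obtain ⟨M, δ, hδ, hfδ⟩ := hf
  obtain ⟨A, hA⟩ : ∃ A, ‖lpTail A u‖ < δ :=
    ((tendsto_lpTail hp u).norm.eventually_lt_const (by rwa [norm_zero])).exists
  have hhead : Memℓp (⇑(∑ x ∈ A, lp.single p x (f x (u x)))) p := lp.memℓp _
  have htail : Memℓp (fun x => f x (u x) - (∑ x ∈ A, lp.single p x (f x (u x))) x) p := by
    refine ((lp.memℓp u).norm.const_mul (M : ℝ)).mono fun x => ?_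
    rw [lp.coeFn_sum, Finset.sum_apply]
    simp only [lp.coeFn_single, Finset.sum_pi_single]
    split_ifs with hx
    · rw [sub_self, norm_zero]
      positivity
    · rw [sub_zero]
      exact hfδ x _ ((norm_apply_le_norm_lpTail u hx).trans_lt hA)
  exact (sub_add_cancel (fun x => f x (u x)) _) ▸ htail.add hhead

end IsUniformBigOAtZero

/-- The superposition (Nemytskii) operator `u ↦ (x ↦ f x (u x))` on `ℓᵖ`. -/
def nemytskii [Fact (1 ≤ p)] (hf : IsUniformBigOAtZero f) (hp : p ≠ ∞) (u : lp E p) : lp G p :=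
  ⟨fun x => f x (u x), hf.memℓp_comp hp u⟩

theorem continuous_sum_single_nemytskii [DecidableEq ι] [Fact (1 ≤ p)]
    (hf : IsUniformBigOAtZero f) (hp : p ≠ ∞) (hcont : ∀ x, Continuous (f x)) (A : Finset ι) :
    Continuous fun u : lp E p => ∑ x ∈ A, lp.single p x (nemytskii hf hp u x) :=
  continuous_finsetSum A fun x _ => (lp.isometry_single x).continuous.comp
    ((hcont x).comp (lp.lipschitzWith_one_eval p x).continuous)

-- Near `u` the operator is uniformly approximated by its restrictions to a finite set of
-- coordinates, the tails being controlled by those of the argument.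
theorem continuous_nemytskii [Fact (1 ≤ p)] (hf : IsUniformBigOAtZero f) (hp : p ≠ ∞)
    (hcont : ∀ x, Continuous (f x)) : Continuous (nemytskii hf hp : lp E p → lp G p) := by
  classical
  obtain ⟨M, δ, hδ, hfδ⟩ := id hf
  have htail (A : Finset ι) (v : lp E p) (hv : ‖lpTail A v‖ < δ) :
      ‖lpTail A (nemytskii hf hp v)‖ ≤ M * ‖lpTail A v‖ := by
    refine lp_norm_le_mul_norm fun x => ?_
    simp only [lpTail_apply]
    split_ifs with hx
    · simp only [norm_zero, mul_zero, le_refl]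
    · exact hfδ x _ ((norm_apply_le_norm_lpTail v hx).trans_lt hv)
  refine continuous_iff_continuousAt.2 fun u =>
    continuousAt_of_locally_uniform_approx_of_continuousAt fun s hs => ?_
  obtain ⟨ε, hε, hεs⟩ := Metric.mem_uniformity_dist.1 hs
  have hη : 0 < min δ (ε / (M + 1)) := by positivity
  obtain ⟨A, hA⟩ : ∃ A, ‖lpTail A u‖ < min δ (ε / (M + 1)) :=
    ((tendsto_lpTail hp u).norm.eventually_lt_const (by rwa [norm_zero])).exists
  refine ⟨_, (continuous_lpTail A).norm.continuousAt.eventually_lt_const hA, _,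
    (continuous_sum_single_nemytskii hf hp hcont A).continuousAt, fun v hv => hεs ?_⟩
  obtain ⟨hvδ, hvε⟩ := lt_min_iff.1 (show ‖lpTail A v‖ < min δ (ε / (M + 1)) from hv)
  rw [lt_div_iff₀ (by positivity)] at hvε
  rw [dist_eq_norm]
  change ‖lpTail A (nemytskii hf hp v)‖ < ε
  nlinarith [htail A v hvδ, norm_nonneg (lpTail A v)]

end Superposition

section Potential

open scoped RealInnerProductSpace

variable {ι : Type*} {E : ι → Type*} [∀ x, NormedAddCommGroup (E x)]
  [∀ x, InnerProductSpace ℝ (E x)] {f : ∀ x, E x → E x} {F : ∀ x, E x → ℝ}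

theorem exists_hasSum_sub_inner_nemytskii (hf : IsUniformBigOAtZero f)
    (hF : ∀ x t, HasFDerivAt (F x) (innerSL ℝ (f x t)) t) (u v : lp E 2) :
    ∃ q : lp E 2, ‖q - u‖ ≤ ‖v - u‖ ∧
      HasSum (fun x => F x (v x) - F x (u x)) ⟪nemytskii hf ENNReal.ofNat_ne_top q, v - u⟫ := by
  have hmean (x : ι) : ∃ t ∈ segment ℝ (u x) (v x), F x (v x) - F x (u x) = ⟪f x t, v x - u x⟫ :=
    domain_mvt (fun t _ => (hF x t).hasFDerivWithinAt) convex_univ (Set.mem_univ _)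
      (Set.mem_univ _)
  choose q hq hFq using hmean
  have hq_sub (x : ι) : ‖q x - u x‖ ≤ ‖(v - u) x‖ := norm_sub_le_of_mem_segment (hq x)
  have hq_mem : Memℓp q 2 :=
    sub_add_cancel q u ▸ ((lp.memℓp (v - u)).mono' hq_sub).add (lp.memℓp u)
  refine ⟨⟨q, hq_mem⟩, lp.norm_mono two_ne_zero hq_sub, ?_⟩
  simp only [hFq]
  exact lp.hasSum_inner (nemytskii hf ENNReal.ofNat_ne_top ⟨q, hq_mem⟩) (v - u)

theorem summable_apply_lp (hf : IsUniformBigOAtZero f)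
    (hF : ∀ x t, HasFDerivAt (F x) (innerSL ℝ (f x t)) t) (hF0 : Summable fun x => F x 0)
    (u : lp E 2) : Summable fun x => F x (u x) := by
  obtain ⟨q, -, hq⟩ := exists_hasSum_sub_inner_nemytskii hf hF 0 u
  simpa using hq.summable.add hF0

theorem hasFDerivAt_tsum_lp (hf : IsUniformBigOAtZero f) (hcont : ∀ x, Continuous (f x))
    (hF : ∀ x t, HasFDerivAt (F x) (innerSL ℝ (f x t)) t) (hF0 : Summable fun x => F x 0)
    (u : lp E 2) :
    HasFDerivAt (fun v : lp E 2 => ∑' x, F x (v x))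
      (innerSL ℝ (nemytskii hf ENNReal.ofNat_ne_top u)) u := by
  rw [hasFDerivAt_iff_isLittleO, Asymptotics.isLittleO_iff]
  intro ε hε
  obtain ⟨δ, hδ, hN⟩ := Metric.continuous_iff.1
    (continuous_nemytskii (p := 2) hf ENNReal.ofNat_ne_top hcont) u ε hε
  filter_upwards [Metric.ball_mem_nhds u hδ] with v hv
  obtain ⟨q, hqu, hq⟩ := exists_hasSum_sub_inner_nemytskii hf hF u v
  rw [mem_ball_iff_norm] at hv
  have hNq := hN q ((dist_eq_norm q u).trans_lt (hqu.trans_lt hv))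
  rw [dist_eq_norm] at hNq
  rw [← (summable_apply_lp hf hF hF0 v).tsum_sub (summable_apply_lp hf hF hF0 u), hq.tsum_eq,
    innerSL_apply_apply, ← inner_sub_left]
  exact (norm_inner_le_norm _ _).trans (by gcongr)

end Potential

section Composition

variable {X Y E : Type*} [NormedAddCommGroup E] {p : ℝ≥0∞} {φ : Y → X} {N : ℕ}

theorem sum_comp_le_mul_tsum (hφ : ∀ x, (φ ⁻¹' {x}).encard ≤ N) {h : X → ℝ} (hnonneg : 0 ≤ h)
    (hsum : Summable h) (s : Finset Y) : ∑ y ∈ s, h (φ y) ≤ N * ∑' x, h x := by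
  classical
  have hcard (x : X) : {y ∈ s | φ y = x}.card ≤ N := by
    have hsub : (({y ∈ s | φ y = x} : Finset Y) : Set Y) ⊆ φ ⁻¹' {x} :=
      fun y hy => (Finset.mem_filter.1 hy).2
    exact_mod_cast (Set.encard_coe_eq_coe_finsetCard _).symm.trans_le
      ((Set.encard_le_encard hsub).trans (hφ x))
  calc ∑ y ∈ s, h (φ y) = ∑ x ∈ s.image φ, {y ∈ s | φ y = x}.card • h x := Finset.sum_comp h φ
    _ ≤ ∑ x ∈ s.image φ, N * h x := Finset.sum_le_sum fun x _ => by
        rw [nsmul_eq_mul]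
        exact mul_le_mul_of_nonneg_right (by exact_mod_cast hcard x) (hnonneg x)
    _ ≤ N * ∑' x, h x := by
        rw [← Finset.mul_sum]
        exact mul_le_mul_of_nonneg_left (hsum.sum_le_tsum _ fun x _ => hnonneg x) N.cast_nonneg

theorem sum_norm_comp_rpow_le (hp : 0 < p.toReal) (hφ : ∀ x, (φ ⁻¹' {x}).encard ≤ N)
    (u : lp (fun _ : X => E) p) (s : Finset Y) :
    ∑ y ∈ s, ‖u (φ y)‖ ^ p.toReal ≤ N * ‖u‖ ^ p.toReal := by
  rw [lp.norm_rpow_eq_tsum hp]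
  exact sum_comp_le_mul_tsum hφ (fun x => by positivity) ((lp.memℓp u).summable hp) s

/-- Composition with a map `φ` whose fibres have at most `N` elements, as an operator on `ℓᵖ`. -/
noncomputable def lpComp (𝕜 : Type*) [NormedField 𝕜] [NormedSpace 𝕜 E] [Fact (1 ≤ p)]
    (hp : 0 < p.toReal) (hφ : ∀ x, (φ ⁻¹' {x}).encard ≤ N) :
    lp (fun _ : X => E) p →L[𝕜] lp (fun _ : Y => E) p :=
  LinearMap.mkContinuous
    { toFun := fun u => ⟨fun y => u (φ y), memℓp_gen' (sum_norm_comp_rpow_le hp hφ u)⟩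
      map_add' := fun _ _ => rfl
      map_smul' := fun _ _ => rfl }
    ((N : ℝ) ^ p.toReal⁻¹) fun u =>
      lp.norm_le_of_forall_sum_le hp (by positivity) fun s => by
        rw [Real.mul_rpow (by positivity) (norm_nonneg u),
          Real.rpow_inv_rpow N.cast_nonneg hp.ne']
        exact sum_norm_comp_rpow_le hp hφ u s

end Composition

section GraphDifference

variable {X : Type*} {adj : X → X → Prop} {D : ℕ}

/-- Oriented edges `(x, y)` of the graph with adjacency relation `adj`. -/
abbrev OrientedEdge (adj : X → X → Prop) := Σ x, {y // adj x y}

theorem encard_preimage_source_le (hdeg : ∀ x, {y | adj x y}.encard ≤ D) (x : X) :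
    ((fun e : OrientedEdge adj => e.1) ⁻¹' {x}).encard ≤ D := by
  refine (Set.encard_le_encard_of_injOn (f := fun e => e.2.1) ?_ ?_).trans (hdeg x)
  · rintro ⟨_, y, hy⟩ rfl
    exact hy
  · rintro ⟨_, y, hy⟩ rfl ⟨_, z, hz⟩ rfl (rfl : y = z)
    rfl

theorem encard_preimage_target_le (hsym : ∀ x y, adj x y → adj y x)
    (hdeg : ∀ x, {y | adj x y}.encard ≤ D) (x : X) :
    ((fun e : OrientedEdge adj => e.2.1) ⁻¹' {x}).encard ≤ D := by
  refine (Set.encard_le_encard_of_injOn (f := fun e => e.1) ?_ ?_).trans (hdeg x)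
  · rintro ⟨y, _, hy⟩ rfl
    exact hsym _ _ hy
  · rintro ⟨y, _, hy⟩ rfl ⟨z, _, hz⟩ (rfl : _ = _) (rfl : y = z)
    rfl

/-- The difference operator `u ↦ ((x, y) ↦ u y - u x)` from `ℓ²` of the vertices to `ℓ²` of the
oriented edges. -/
noncomputable def graphDiff (hsym : ∀ x y, adj x y → adj y x)
    (hdeg : ∀ x, {y | adj x y}.encard ≤ D) : H1 X →L[ℝ] H1 (OrientedEdge adj) :=
  lpComp ℝ (by norm_num) (encard_preimage_target_le hsym hdeg) -
    lpComp ℝ (by norm_num) (encard_preimage_source_le hdeg)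

theorem hasSum_gradSq (hsym : ∀ x y, adj x y → adj y x)
    (hdeg : ∀ x, {y | adj x y}.encard ≤ D) (u : H1 X) :
    HasSum (gradSq adj u) (1 / 2 * ‖graphDiff hsym hdeg u‖ ^ 2) := by
  have hedges : HasSum (fun e : OrientedEdge adj => (u e.2.1 - u e.1) * (u e.2.1 - u e.1))
      (‖graphDiff hsym hdeg u‖ ^ 2) := by
    rw [← real_inner_self_eq_norm_sq]
    exact lp.hasSum_inner (graphDiff hsym hdeg u) (graphDiff hsym hdeg u)
  exact (hedges.sigma fun x => (hedges.summable.sigma_factor x).hasSum).mul_left (1 / 2)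

end GraphDifference

section Energy

open Set
open scoped RealInnerProductSpace

variable {ι H : Type*} {E : ι → Type*} [∀ x, NormedAddCommGroup (E x)]
  [∀ x, InnerProductSpace ℝ (E x)] [NormedAddCommGroup H] [InnerProductSpace ℝ H]
  {g : ∀ x, E x → E x} {G : ∀ x, E x → ℝ} {c : ℝ} {L : lp E 2 →L[ℝ] H}

theorem strictMonoOn_inner_nemytskii_smul_div (hg : IsUniformBigOAtZero g)
    (hmono : ∀ x v, v ≠ 0 → StrictMonoOn (fun t : ℝ => ⟪g x (t • v), v⟫ / t) (Ioi 0))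
    {w : lp E 2} (hw : w ≠ 0) :
    StrictMonoOn (fun t : ℝ => ⟪nemytskii hg ENNReal.ofNat_ne_top (t • w), w⟫ / t) (Ioi 0) := by
  intro a ha b hb hab
  obtain ⟨x₀, hx₀⟩ : ∃ x, w x ≠ 0 := Function.ne_iff.1 fun h => hw (lp.ext h)
  have hsum (t : ℝ) := (lp.hasSum_inner (nemytskii hg ENNReal.ofNat_ne_top (t • w)) w).div_const t
  have hle (x : ι) : ⟪g x (a • w x), w x⟫ / a ≤ ⟪g x (b • w x), w x⟫ / b := by
    by_cases hx : w x = 0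
    · simp only [hx, inner_zero_right, zero_div, le_refl]
    · exact (hmono x _ hx ha hb hab).le
  exact hasSum_lt hle (hmono x₀ _ hx₀ ha hb hab) (hsum a) (hsum b)

/-- The energy `c/2 ‖L u‖² - ∑ₓ G x (u x)`, a quadratic form minus a local potential; `L` will be
the difference operator of a graph. -/
noncomputable def energy (c : ℝ) (L : lp E 2 →L[ℝ] H) (G : ∀ x, E x → ℝ) (u : lp E 2) : ℝ :=
  c / 2 * ‖L u‖ ^ 2 - ∑' x, G x (u x)

theorem hasFDerivAt_energy (hg : IsUniformBigOAtZero g) (hcont : ∀ x, Continuous (g x))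
    (hG : ∀ x t, HasFDerivAt (G x) (innerSL ℝ (g x t)) t) (hG0 : Summable fun x => G x 0)
    (u : lp E 2) :
    HasFDerivAt (energy c L G)
      (c • (innerSL ℝ (L u)).comp L - innerSL ℝ (nemytskii hg ENNReal.ofNat_ne_top u)) u := by
  have hquad : HasFDerivAt (fun v => c / 2 * ‖L v‖ ^ 2) (c • (innerSL ℝ (L u)).comp L) u :=
    (L.hasFDerivAt.norm_sq.const_mul (c / 2)).congr_fderiv (by
      ext v
      simp only [smul_apply, ContinuousLinearMap.comp_apply, coe_innerSL_apply, nsmul_eq_mul,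
        Nat.cast_ofNat, smul_eq_mul]
      ring)
  exact hquad.sub (hasFDerivAt_tsum_lp hg hcont hG hG0 u)

theorem contDiff_energy (hg : IsUniformBigOAtZero g) (hcont : ∀ x, Continuous (g x))
    (hG : ∀ x t, HasFDerivAt (G x) (innerSL ℝ (g x t)) t) (hG0 : Summable fun x => G x 0) :
    ContDiff ℝ 1 (energy c L G) := by
  refine contDiff_one_iff_hasFDerivAt.2 ⟨_, ?_, hasFDerivAt_energy hg hcont hG hG0⟩
  have hN := continuous_nemytskii (p := 2) hg ENNReal.ofNat_ne_top hcont
  fun_prop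

theorem strictAntiOn_fderiv_energy_smul_div (hg : IsUniformBigOAtZero g)
    (hcont : ∀ x, Continuous (g x)) (hG : ∀ x t, HasFDerivAt (G x) (innerSL ℝ (g x t)) t)
    (hG0 : Summable fun x => G x 0)
    (hmono : ∀ x v, v ≠ 0 → StrictMonoOn (fun t : ℝ => ⟪g x (t • v), v⟫ / t) (Ioi 0))
    {w : lp E 2} (hw : w ≠ 0) :
    StrictAntiOn (fun t : ℝ => fderiv ℝ (energy c L G) (t • w) w / t) (Ioi 0) := by
  have hratio (t : ℝ) (ht : t ∈ Ioi 0) :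
      c * ‖L w‖ ^ 2 - ⟪nemytskii hg ENNReal.ofNat_ne_top (t • w), w⟫ / t =
        fderiv ℝ (energy c L G) (t • w) w / t := by
    have ht' : t ≠ 0 := ne_of_gt ht
    simp only [(hasFDerivAt_energy hg hcont hG hG0 (t • w)).fderiv, sub_apply, smul_apply,
      ContinuousLinearMap.comp_apply, coe_innerSL_apply, map_smul, smul_eq_mul,
      real_inner_self_eq_norm_sq]
    field_simp
  exact StrictAntiOn.congr (fun a ha b hb hab =>
    sub_lt_sub_left (strictMonoOn_inner_nemytskii_smul_div hg hmono hw ha hb hab) _) hratio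

end Energy

section RealNonlinearity

open Set
open scoped RealInnerProductSpace

theorem strictMonoOn_inner_smul_div_of_strictMonoOn_div_abs {g : ℝ → ℝ}
    (hneg : StrictMonoOn (fun t => g t / |t|) (Iio 0))
    (hpos : StrictMonoOn (fun t => g t / |t|) (Ioi 0)) {v : ℝ} (hv : v ≠ 0) :
    StrictMonoOn (fun t : ℝ => ⟪g (t • v), v⟫ / t) (Ioi 0) := by
  have hratio (t : ℝ) (ht : t ∈ Ioi 0) :
      v * |v| * (g (t * v) / |t * v|) = ⟪g (t • v), v⟫ / t := by
    have ht' : t ≠ 0 := ne_of_gt ht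
    simp only [smul_eq_mul, RCLike.inner_apply, conj_trivial, abs_mul, abs_of_pos (mem_Ioi.1 ht)]
    field_simp
  refine StrictMonoOn.congr (fun a ha b hb hab => ?_) hratio
  rcases hv.lt_or_gt with hv | hv
  · exact mul_lt_mul_of_neg_left (hneg (mul_neg_of_pos_of_neg hb hv) (mul_neg_of_pos_of_neg ha hv)
      (mul_lt_mul_of_neg_right hab hv)) (mul_neg_of_neg_of_pos hv (abs_pos.2 hv.ne))
  · exact mul_lt_mul_of_pos_left (hpos (mul_pos ha hv) (mul_pos hb hv)
      (mul_lt_mul_of_pos_right hab hv)) (mul_pos hv (abs_pos.2 hv.ne'))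

theorem strictMonoOn_inner_sub_mul_smul_div {g : ℝ → ℝ}
    (hneg : StrictMonoOn (fun t => g t / |t|) (Iio 0))
    (hpos : StrictMonoOn (fun t => g t / |t|) (Ioi 0)) (c : ℝ) {v : ℝ} (hv : v ≠ 0) :
    StrictMonoOn (fun t : ℝ => ⟪g (t • v) - c * (t • v), v⟫ / t) (Ioi 0) := by
  refine ((strictMonoOn_inner_smul_div_of_strictMonoOn_div_abs hneg hpos hv).add_const
    (-(c * v ^ 2))).congr fun t ht => ?_
  have ht' : t ≠ 0 := ne_of_gt ht
  simp only [smul_eq_mul, RCLike.inner_apply, conj_trivial]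
  field_simp
  ring

variable {X : Type*} {V : X → ℝ} {C : ℝ} {f F : X → ℝ → ℝ}

theorem isUniformBigOAtZero_sub_mul (hf : IsUniformBigOAtZero f) (hV : ∀ x, |V x| ≤ C) :
    IsUniformBigOAtZero fun x t => f x t - V x * t := by
  obtain ⟨M, δ, hδ, hfδ⟩ := hf
  refine ⟨M + C.toNNReal, δ, hδ, fun x t ht => ?_⟩
  calc ‖f x t - V x * t‖ ≤ ‖f x t‖ + |V x| * ‖t‖ := (norm_sub_le _ _).trans_eq (by simp)
    _ ≤ M * ‖t‖ + C.toNNReal * ‖t‖ := by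
        gcongr
        · exact hfδ x t ht
        · exact (hV x).trans (Real.le_coe_toNNReal C)
    _ = (M + C.toNNReal : NNReal) * ‖t‖ := by push_cast; ring

theorem hasFDerivAt_primitive_sub_mul_sq (hcont : ∀ x, Continuous (f x))
    (hF : ∀ x t, F x t = ∫ s in (0 : ℝ)..t, f x s) (x : X) (t : ℝ) :
    HasFDerivAt (fun t => F x t - V x / 2 * t ^ 2) (innerSL ℝ (f x t - V x * t)) t := by
  have hderivF : HasDerivAt (F x) (f x t) t :=
    funext (hF x) ▸ ((hcont x).integral_hasStrictDerivAt 0 t).hasDerivAt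
  refine (hderivF.sub ((hasDerivAt_pow 2 t).const_mul (V x / 2))).hasFDerivAt.congr_fderiv ?_
  ext
  simp only [Nat.cast_ofNat, Nat.add_one_sub_one, pow_one,
    ContinuousLinearMap.toSpanSingleton_apply, smul_eq_mul, one_mul, coe_innerSL_apply,
    RCLike.inner_apply, conj_trivial]
  ring

end RealNonlinearity

section NehariOnGraph

variable {X : Type*} {adj : X → X → Prop} {D : ℕ} {V : X → ℝ} {C : ℝ} {f F : X → ℝ → ℝ}

theorem summable_mul_sq_lp (hV : ∀ x, |V x| ≤ C) (u : H1 X) :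
    Summable fun x => V x * u x ^ 2 := by
  have hsq : Summable fun x => u x ^ 2 := by
    simpa [sq] using lp.summable_inner (𝕜 := ℝ) u u
  refine .of_norm_bounded (hsq.mul_left C) fun x => ?_
  rw [norm_mul, Real.norm_of_nonneg (sq_nonneg (u x))]
  exact mul_le_mul_of_nonneg_right (hV x) (sq_nonneg _)

-- The term `V u²` is absorbed into the nonlinearity, which leaves the pure Dirichlet form.
theorem PhiF_eq_energy (hsym : ∀ x y, adj x y → adj y x)
    (hdeg : ∀ x, {y | adj x y}.encard ≤ D) (hV : ∀ x, |V x| ≤ C)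
    (hG : ∀ u : H1 X, Summable fun x => F x (u x) - V x / 2 * u x ^ 2) :
    PhiF adj V F = energy (1 / 2) (graphDiff hsym hdeg) fun x t => F x t - V x / 2 * t ^ 2 := by
  funext u
  have hgrad := hasSum_gradSq hsym hdeg u
  have hpot := summable_mul_sq_lp hV u
  have hF : Summable fun x => F x (u x) :=
    ((hG u).add (hpot.mul_left (1 / 2))).congr fun x => by ring
  have hpot_half : ∑' x, V x / 2 * u x ^ 2 = 1 / 2 * ∑' x, V x * u x ^ 2 := by
    rw [← tsum_mul_left]
    exact tsum_congr fun x => by ring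
  rw [PhiF, energy, hgrad.summable.tsum_add hpot, hgrad.tsum_eq,
    hF.tsum_sub ((hpot.mul_left (1 / 2)).congr fun x => by ring), hpot_half]
  ring

theorem isUniformBigOAtZero_of_growth {a q : ℝ} (ha : 0 ≤ a) (hq : 2 ≤ q)
    (hgrowth : ∀ x t, |f x t| ≤ a * (|t| + |t| ^ (q - 1))) : IsUniformBigOAtZero f := by
  refine ⟨⟨2 * a, by positivity⟩, 1, one_pos, fun x t ht => ?_⟩
  have hpow : |t| ^ (q - 1) ≤ |t| := by
    simpa only [Real.rpow_one] using
      Real.rpow_le_rpow_of_exponent_ge' (abs_nonneg t) ht.le zero_le_one (by linarith : 1 ≤ q - 1)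
  calc |f x t| ≤ a * (|t| + |t| ^ (q - 1)) := hgrowth x t
    _ ≤ a * (|t| + |t|) := by gcongr
    _ = 2 * a * |t| := by ring

theorem gradSq_smul (s : ℝ) (u : X → ℝ) (x : X) :
    gradSq adj (s • u) x = s ^ 2 * gradSq adj u x := by
  simp only [gradSq, gammaProd, mul_left_comm (s ^ 2), ← tsum_mul_left, Pi.smul_apply, smul_eq_mul]
  congr 2 with y
  ring

theorem nrmH_smul_of_nonneg {s : ℝ} (hs : 0 ≤ s) (w : H1 X) :
    nrmH adj V (s • w) = s * nrmH adj V w := by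
  have hscale (x : X) : gradSq adj (s • ⇑w) x + V x * (s • ⇑w) x ^ 2 =
      s ^ 2 * (gradSq adj w x + V x * w x ^ 2) := by
    rw [gradSq_smul, Pi.smul_apply, smul_eq_mul]
    ring
  calc nrmH adj V (s • w) = √(∑' x, s ^ 2 * (gradSq adj w x + V x * w x ^ 2)) :=
        congrArg Real.sqrt (tsum_congr hscale)
    _ = s * nrmH adj V w := by
        rw [tsum_mul_left, Real.sqrt_mul (sq_nonneg s), Real.sqrt_sq hs]
        rfl

theorem ne_zero_of_nrmH_eq_one {w : H1 X} (hw : nrmH adj V w = 1) : w ≠ 0 := by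
  rintro rfl
  simp [nrmH, nrmV, gradSq, gammaProd] at hw

end NehariOnGraph

theorem stmt13_general {Vtx : Type*} (adj : Vtx → Vtx → Prop) (D : ℕ)
    (hsym : ∀ x y, adj x y → adj y x) (hdeg : ∀ x, {y | adj x y}.encard ≤ D)
    (Vp : Vtx → ℝ) (C : ℝ) (hVbd : ∀ x, |Vp x| ≤ C)
    (f : Vtx → ℝ → ℝ) (hcont : ∀ x, Continuous (f x)) (hlin : IsUniformBigOAtZero f)
    (hmono : ∀ x, StrictMonoOn (fun t => f x t / |t|) (Set.Iio 0) ∧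
      StrictMonoOn (fun t => f x t / |t|) (Set.Ioi 0))
    (F : Vtx → ℝ → ℝ) (hF : ∀ x t, F x t = ∫ s in (0 : ℝ)..t, f x s)
    (sw : H1 Vtx → ℝ)
    (hsw : ∀ w, w ≠ 0 → 0 < sw w ∧ fderiv ℝ (PhiF adj Vp F) (sw w • w) (sw w • w) = 0) :
    ContDiffOn ℝ 1 (fun w => PhiF adj Vp F (sw w • w)) {w | w ≠ 0} ∧
    ∀ w, w ≠ 0 → HasFDerivAt (fun v => PhiF adj Vp F (sw v • v))
      (sw w • fderiv ℝ (PhiF adj Vp F) (sw w • w)) w := by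
  have hg := isUniformBigOAtZero_sub_mul hlin hVbd
  have hgcont (x : Vtx) : Continuous fun t => f x t - Vp x * t := by fun_prop
  have hG := hasFDerivAt_primitive_sub_mul_sq (V := Vp) hcont hF
  have hG0 : Summable fun x => F x 0 - Vp x / 2 * 0 ^ 2 := by simp [hF]
  have hmono_ray (x : Vtx) (v : ℝ) (hv : v ≠ 0) :=
    strictMonoOn_inner_sub_mul_smul_div (hmono x).1 (hmono x).2 (Vp x) hv
  rw [PhiF_eq_energy hsym hdeg hVbd (summable_apply_lp hg hG hG0)] at hsw ⊢
  have hΦ := contDiff_energy (c := 1 / 2) (L := graphDiff hsym hdeg) hg hgcont hG hG0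
  have hfib := HasUnimodalFibers.of_strictAntiOn_fderiv (hΦ.differentiable one_ne_zero)
    (fun w => strictAntiOn_fderiv_energy_smul_div hg hgcont hG hG0 hmono_ray)
    (fun w hw => (hsw w hw).1) (fun w hw => (hsw w hw).2)
  exact ⟨hfib.contDiffOn hΦ, fun w hw => hfib.hasFDerivAt hΦ hw⟩

/-- Corollary 3.6: `Ψ = Ψ̂|_S` is `C¹` on the unit sphere `S` and
`Ψ'(w)z = ‖m(w)‖·Φ'(m(w))z` for all `z ∈ T_wS = {z : ⟨w,z⟩ = 0}`. -/
theorem stmt13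
    {Vtx : Type*} (adj : Vtx → Vtx → Prop) (D : ℕ)
    (hsym : ∀ x y, adj x y → adj y x)
    (hirr : ∀ x, ¬ adj x x)
    (hfin : ∀ x, {y | adj x y}.Finite)
    (hdeg : ∀ x, {y | adj x y}.ncard ≤ D)
    (Vp : Vtx → ℝ) (C1 C2 : ℝ) (hC1 : 0 < C1)
    (hVbd : ∀ x, C1 ≤ Vp x ∧ Vp x ≤ C2)
    (f : Vtx → ℝ → ℝ) (hcont : ∀ x, Continuous (f x))
    (a q : ℝ) (ha : 0 < a) (hq : 2 < q)
    (hgrowth : ∀ x t, |f x t| ≤ a * (|t| + |t| ^ (q - 1)))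
    (hsmall : ∀ ε > 0, ∃ δ > 0, ∀ x t, t ≠ 0 → |t| < δ → |f x t| ≤ ε * |t|)
    (hmono : ∀ x, StrictMonoOn (fun t => f x t / |t|) (Set.Iio 0) ∧
             StrictMonoOn (fun t => f x t / |t|) (Set.Ioi 0))
    (F : Vtx → ℝ → ℝ) (hF : ∀ x t, F x t = ∫ s in (0:ℝ)..t, f x s)
    (hsuper : ∀ M : ℝ, ∃ R > 0, ∀ x t, R ≤ |t| → M ≤ F x t / t ^ 2)
    (sw : H1 Vtx → ℝ)
    (hsw : ∀ w : H1 Vtx, w ≠ 0 → 0 < sw w ∧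
      fderiv ℝ (PhiF adj Vp F) (sw w • w) (sw w • w) = 0 ∧
      ∀ s : ℝ, 0 < s → fderiv ℝ (PhiF adj Vp F) (s • w) (s • w) = 0 → s = sw w)
    :
    ContDiffOn ℝ 1 (fun w : H1 Vtx => PhiF adj Vp F (sw w • w))
      {w : H1 Vtx | nrmH adj Vp w = 1} ∧
    ∀ w : H1 Vtx, nrmH adj Vp w = 1 → ∀ z : H1 Vtx, iprodH adj Vp w z = 0 →
      fderiv ℝ (fun v : H1 Vtx => PhiF adj Vp F (sw v • v)) w z =
        nrmH adj Vp (sw w • w) * fderiv ℝ (PhiF adj Vp F) (sw w • w) z := by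
  obtain ⟨hsmooth, hderiv⟩ := stmt13_general adj D hsym
    (fun x => (hfin x).cast_ncard_eq ▸ Nat.cast_le.2 (hdeg x)) Vp C2
    (fun x => (abs_of_pos (hC1.trans_le (hVbd x).1)).trans_le (hVbd x).2) f hcont
    (isUniformBigOAtZero_of_growth ha.le hq.le hgrowth) hmono F hF sw
    fun w hw => ⟨(hsw w hw).1, (hsw w hw).2.1⟩
  refine ⟨hsmooth.mono fun w => ne_zero_of_nrmH_eq_one, fun w hw z _ => ?_⟩
  have hw0 : w ≠ 0 := ne_zero_of_nrmH_eq_one hw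
  rw [(hderiv w hw0).fderiv, nrmH_smul_of_nonneg (hsw w hw0).1.le, hw, mul_one]
  rfl
end

section
/- In the Nehari setting, let Ψ = Φ ∘ m on the unit sphere S, where m(w) = s_w w. Then w ∈ S is a critical point of Ψ (i.e. Ψ'(w)z = 0 for all z ∈ T_wS) if and only if m(w) is a nontrivial critical point of Φ (i.e. Φ'(m(w)) = 0 and m(w) ≠ 0). Moreover inf_N Φ = inf_S Ψ. -/
open scoped ENNReal

/-!
On each ray where the quadratic form is positive, `t ↦ Φ(t w)` increases up to `t = s_w` and
decreases afterwards, because `Φ'(t w) w / t` is strictly decreasing. So `Ψ(v)` is the maximum of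
`t ↦ Φ(t v)`, and near `w` it is squeezed between `v ↦ Φ(s_w v)` and
`v ↦ Φ(s_w w) + Φ(s_v v) - Φ(s_v w)`. Both have derivative `s_w Φ'(s_w w)` at `w`, the second one
because `v ↦ s_v` is continuous; hence `Ψ'(w) = s_w Φ'(m(w))`. As `Φ'(m(w))` vanishes at `w`, it is
zero as soon as it vanishes on the complement `T_w S`. The two infima agree because `m` maps `S`
onto the Nehari manifold.
-/

section RayPeak

open Filter Set Topology

variable {E : Type*} [NormedAddCommGroup E] [NormedSpace ℝ E]

theorem hasFDerivAt_of_squeeze {φ g h : E → ℝ} {L : E →L[ℝ] ℝ} {w : E}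
    (hg : HasFDerivAt g L w) (hh : HasFDerivAt h L w) (hgw : g w = φ w) (hhw : h w = φ w)
    (hgφ : ∀ᶠ v in 𝓝 w, g v ≤ φ v) (hφh : ∀ᶠ v in 𝓝 w, φ v ≤ h v) : HasFDerivAt φ L w := by
  refine .of_isLittleO (Asymptotics.isLittleO_iff.2 fun ε hε => ?_)
  filter_upwards [hgφ, hφh, Asymptotics.isLittleO_iff.1 hg.isLittleO hε,
    Asymptotics.isLittleO_iff.1 hh.isLittleO hε] with v hgv hhv hg' hh'
  rw [Real.norm_eq_abs, abs_le] at *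
  constructor <;> linarith

/-- The scaling `s` enters both terms, so it only has to be continuous. -/
theorem hasFDerivAt_sub_smul_of_continuousAt {P : E → ℝ} {L : E →L[ℝ] ℝ} {s : E → ℝ} {w : E}
    (hP : HasStrictFDerivAt P L (s w • w)) (hs : ContinuousAt s w) :
    HasFDerivAt (fun v => P (s v • v) - P (s v • w)) (s w • L) w := by
  have hlim : Tendsto (fun v => (s v • v, s v • w)) (𝓝 w) (𝓝 (s w • w, s w • w)) :=
    (hs.smul continuousAt_id).prodMk (hs.smul continuousAt_const)
  have hincr : (fun v => s v • (v - w)) =O[𝓝 w] fun v => v - w := by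
    simpa only [one_smul] using (hs.isBigO_one ℝ).smul (Asymptotics.isBigO_refl (· - w) (𝓝 w))
  have hmain : (fun v => P (s v • v) - P (s v • w) - s v * L (v - w)) =o[𝓝 w] fun v => v - w := by
    refine ((hP.isLittleO.comp_tendsto hlim).trans_isBigO
      (by simpa only [Function.comp_def, ← smul_sub] using hincr)).congr_left fun v => ?_
    simp only [Function.comp_apply, ← smul_sub, map_smul, smul_eq_mul]
  have hscale : (fun v => (s v - s w) * L (v - w)) =o[𝓝 w] fun v => v - w := by
    have hzero : (fun v => s v - s w) =o[𝓝 w] fun _ => (1 : ℝ) :=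
      (Asymptotics.isLittleO_one_iff ℝ).2 (tendsto_sub_nhds_zero_iff.2 hs)
    simpa only [smul_eq_mul, one_smul, map_sub] using
      (hzero.smul_isBigO (L.isBigO_sub (𝓝 w) w)).norm_right.of_norm_right
  refine .of_isLittleO ((hmain.add hscale).congr_left fun v => ?_)
  simp only [sub_self, sub_zero, smul_apply, smul_eq_mul]
  ring

/-- On the open ray through `w`, the functional `P` strictly increases up to `r • w` and strictly
decreases afterwards; in the Nehari setting `r • w` is then the point `m(w)` of the Nehari
manifold. -/
structure IsRayPeak (P : E → ℝ) (w : E) (r : ℝ) : Prop where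
  pos : 0 < r
  strictMonoOn : StrictMonoOn (fun t : ℝ => P (t • w)) (Ioc 0 r)
  strictAntiOn : StrictAntiOn (fun t : ℝ => P (t • w)) (Ici r)

namespace IsRayPeak

variable {P : E → ℝ} {w : E} {r t₁ t₂ : ℝ}

theorem apply_le (h : IsRayPeak P w r) {t : ℝ} (ht : 0 < t) : P (t • w) ≤ P (r • w) := by
  rcases le_total t r with htr | hrt
  · exact h.strictMonoOn.monotoneOn ⟨ht, htr⟩ ⟨h.pos, le_rfl⟩ htr
  · exact h.strictAntiOn.antitoneOn self_mem_Ici hrt hrt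

theorem lt_of_apply_lt (h : IsRayPeak P w r) (ht : t₁ < t₂) (hP : P (t₁ • w) < P (t₂ • w)) :
    t₁ < r := by
  by_contra! hr
  exact hP.not_gt (h.strictAntiOn hr (hr.trans ht.le) ht)

theorem gt_of_apply_gt (h : IsRayPeak P w r) (ht₁ : 0 < t₁) (ht : t₁ < t₂)
    (hP : P (t₂ • w) < P (t₁ • w)) : r < t₂ := by
  by_contra! hr
  exact hP.not_gt (h.strictMonoOn ⟨ht₁, ht.le.trans hr⟩ ⟨ht₁.trans ht, hr⟩ ht)

theorem unique {r' : ℝ} (h : IsRayPeak P w r) (h' : IsRayPeak P w r') : r = r' := by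
  by_contra! hne
  rcases hne.lt_or_gt with hlt | hlt
  · exact lt_irrefl r (h.lt_of_apply_lt hlt
      (h'.strictMonoOn ⟨h.pos, hlt.le⟩ ⟨h'.pos, le_rfl⟩ hlt))
  · exact lt_irrefl r' (h'.lt_of_apply_lt hlt
      (h.strictMonoOn ⟨h'.pos, hlt.le⟩ ⟨h.pos, le_rfl⟩ hlt))

theorem of_strictAntiOn_fderiv_div {P' : E → E →L[ℝ] ℝ} (hP : ∀ u, HasFDerivAt P (P' u) u)
    (hanti : StrictAntiOn (fun t : ℝ => P' (t • w) w / t) (Ioi 0)) (hr : 0 < r)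
    (hcrit : P' (r • w) w = 0) : IsRayPeak P w r := by
  have hder (t : ℝ) : HasDerivAt (fun t : ℝ => P (t • w)) (P' (t • w) w) t :=
    (hP (t • w)).comp_hasDerivAt t (by simpa using (hasDerivAt_id t).smul_const w)
  have hcont : Continuous fun t : ℝ => P (t • w) :=
    continuous_iff_continuousAt.2 fun t => (hder t).continuousAt
  have hzero : P' (r • w) w / r = 0 := by rw [hcrit, zero_div]
  refine ⟨hr, strictMonoOn_of_deriv_pos (convex_Ioc 0 r) hcont.continuousOn fun t ht => ?_,
    strictAntiOn_of_deriv_neg (convex_Ici r) hcont.continuousOn fun t ht => ?_⟩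
  · rw [interior_Ioc] at ht
    have hpos : 0 < P' (t • w) w / t := hzero ▸ hanti ht.1 hr ht.2
    rw [(hder t).deriv]
    exact (div_pos_iff_of_pos_right ht.1).1 hpos
  · rw [interior_Ici] at ht
    have ht₀ : 0 < t := hr.trans ht
    have hneg : P' (t • w) w / t < 0 := hzero ▸ hanti hr ht₀ ht
    rw [(hder t).deriv]
    simpa only [zero_mul] using (div_lt_iff₀ ht₀).1 hneg

variable {s : E → ℝ}

theorem continuousAt (hP : Continuous P) (hs : ∀ᶠ v in 𝓝 w, IsRayPeak P v (s v)) :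
    ContinuousAt s w := by
  have hw : IsRayPeak P w (s w) := hs.self_of_nhds
  have hray (t : ℝ) : Continuous fun v : E => P (t • v) := hP.comp (continuous_const_smul t)
  refine tendsto_order.2 ⟨fun a ha => ?_, fun b hb => ?_⟩
  · obtain ⟨t, hat, ht⟩ := exists_between (max_lt ha hw.pos)
    have hlt : P (t • w) < P (s w • w) :=
      hw.strictMonoOn ⟨(le_max_right _ _).trans_lt hat, ht.le⟩ ⟨hw.pos, le_rfl⟩ ht
    filter_upwards [hs, (hray t).continuousAt.eventually_lt (hray (s w)).continuousAt hlt]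
      with v hv hPv
    exact (le_max_left _ _).trans_lt (hat.trans (hv.lt_of_apply_lt ht hPv))
  · have hlt : P (b • w) < P (s w • w) := hw.strictAntiOn self_mem_Ici hb.le hb
    filter_upwards [hs, (hray b).continuousAt.eventually_lt (hray (s w)).continuousAt hlt]
      with v hv hPv
    exact hv.gt_of_apply_gt hw.pos hb hPv

theorem hasFDerivAt {L : E →L[ℝ] ℝ} (hPc : Continuous P) (hP : HasStrictFDerivAt P L (s w • w))
    (hs : ∀ᶠ v in 𝓝 w, IsRayPeak P v (s v)) :
    HasFDerivAt (fun v => P (s v • v)) (s w • L) w := by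
  have hw : IsRayPeak P w (s w) := hs.self_of_nhds
  have hlower : HasFDerivAt (fun v => P (s w • v)) (s w • L) w :=
    (hP.hasFDerivAt.comp w ((hasFDerivAt_id w).const_smul (s w))).congr_fderiv (by ext; simp)
  have hupper : HasFDerivAt (fun v => P (s w • w) + (P (s v • v) - P (s v • w))) (s w • L) w :=
    (hasFDerivAt_sub_smul_of_continuousAt hP (continuousAt hPc hs)).const_add _
  refine hasFDerivAt_of_squeeze hlower hupper rfl (by simp) ?_ ?_
  · filter_upwards [hs] with v hv using hv.apply_le hw.pos
  · filter_upwards [hs] with v hv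
    linarith [hw.apply_le hv.pos]

end IsRayPeak

end RayPeak

section AbstractNehari

open Filter Set Topology

theorem eq_zero_of_ker_le_of_apply_eq_zero {K V : Type*} [Field K] [AddCommGroup V] [Module K V]
    {φ l : V →ₗ[K] K} {w : V} (hφ : φ w ≠ 0) (hker : ∀ z, φ z = 0 → l z = 0) (hl : l w = 0) :
    l = 0 := by
  ext z
  have hproj : φ (z - (φ z / φ w) • w) = 0 := by simp [hφ]
  simpa [hl] using hker _ hproj

theorem pos_of_strictMonoOn_of_tendsto_zero {φ : ℝ → ℝ} (hφ : StrictMonoOn φ (Ioi 0))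
    (hlim : Tendsto φ (𝓝[>] 0) (𝓝 0)) {t : ℝ} (ht : 0 < t) : 0 < φ t := by
  have ht' : 0 < t / 2 := half_pos ht
  have hnonneg : 0 ≤ φ (t / 2) := by
    refine le_of_tendsto hlim ?_
    filter_upwards [Ioo_mem_nhdsGT ht'] with r hr using (hφ hr.1 ht' hr.2).le
  exact hnonneg.trans_lt (hφ ht' ht (half_lt_self ht))

variable {E : Type*} [NormedAddCommGroup E] [NormedSpace ℝ E]

theorem ne_zero_of_apply_self_pos {B : E →L[ℝ] E →L[ℝ] ℝ} {w : E} (hw : 0 < B w w) : w ≠ 0 := by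
  rintro rfl
  simp at hw

/-- The functional `u ↦ ½ B(u, u) - J(u)`, an abstract form of `Φ`. -/
noncomputable def quadraticEnergy (B : E →L[ℝ] E →L[ℝ] ℝ) (J : E → ℝ) (u : E) : ℝ :=
  1 / 2 * B u u - J u

/-- `J` is `C¹` with derivative `J'`, which is superlinear: `J' u = o(u)` at the origin and, as in
the Nehari setting, `t ↦ J' (t • w) w / t` strictly increases along every ray. -/
structure HasSuperlinearGradient (J : E → ℝ) (J' : E → E →L[ℝ] ℝ) : Prop where
  hasStrictFDerivAt : ∀ u, HasStrictFDerivAt J (J' u) u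
  isLittleO : J' =o[𝓝 0] fun u => u
  strictMonoOn : ∀ w ≠ 0, StrictMonoOn (fun t : ℝ => J' (t • w) w / t) (Ioi 0)

namespace HasSuperlinearGradient

variable {B : E →L[ℝ] E →L[ℝ] ℝ} {J : E → ℝ} {J' : E → E →L[ℝ] ℝ} {s : E → ℝ} {u w : E}

theorem apply_self_pos (hJ : HasSuperlinearGradient J J') (hu : u ≠ 0) : 0 < J' u u := by
  have hray : Tendsto (fun t : ℝ => t • u) (𝓝[>] 0) (𝓝 0) :=
    ((continuous_id.smul continuous_const).tendsto' 0 0 (zero_smul ℝ u)).mono_left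
      nhdsWithin_le_nhds
  have hpair : (fun t : ℝ => J' (t • u) u) =O[𝓝[>] 0] fun t => J' (t • u) :=
    (ContinuousLinearMap.apply ℝ ℝ u).isBigO_comp _ _
  have hsmul : (fun t : ℝ => t • u) =O[𝓝[>] 0] fun t => t :=
    (ContinuousLinearMap.toSpanSingleton ℝ u).isBigO_id _
  have hlim : Tendsto (fun t : ℝ => J' (t • u) u / t) (𝓝[>] 0) (𝓝 0) :=
    (hpair.trans_isLittleO
      ((hJ.isLittleO.comp_tendsto hray).trans_isBigO hsmul)).tendsto_div_nhds_zero
  simpa using pos_of_strictMonoOn_of_tendsto_zero (hJ.strictMonoOn u hu) hlim one_pos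

theorem hasStrictFDerivAt_energy (hJ : HasSuperlinearGradient J J') (hB : ∀ u v, B u v = B v u)
    (u : E) : HasStrictFDerivAt (quadraticEnergy B J) (B u - J' u) u := by
  have hform := B.hasStrictFDerivAt_of_bilinear (hasStrictFDerivAt_id u) (hasStrictFDerivAt_id u)
  refine ((hform.const_mul (1 / 2)).sub (hJ.hasStrictFDerivAt u)).congr_fderiv ?_
  ext z
  change 1 / 2 * (B u z + B z u) - J' u z = B u z - J' u z
  rw [hB z u]
  ring

theorem fderiv_energy (hJ : HasSuperlinearGradient J J') (hB : ∀ u v, B u v = B v u) (u : E) :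
    fderiv ℝ (quadraticEnergy B J) u = B u - J' u :=
  (hJ.hasStrictFDerivAt_energy hB u).hasFDerivAt.fderiv

theorem isRayPeak_energy (hJ : HasSuperlinearGradient J J') (hB : ∀ u v, B u v = B v u)
    (hw : w ≠ 0) {r : ℝ} (hr : 0 < r) (hcrit : fderiv ℝ (quadraticEnergy B J) (r • w) (r • w) = 0) :
    IsRayPeak (quadraticEnergy B J) w r := by
  refine .of_strictAntiOn_fderiv_div (fun u => (hJ.hasStrictFDerivAt_energy hB u).hasFDerivAt)
    ?_ hr ?_
  · have hdiv {t : ℝ} (ht : 0 < t) :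
        (B (t • w) - J' (t • w)) w / t = B w w - J' (t • w) w / t := by
      simp [sub_div, ht.ne']
    intro t₁ ht₁ t₂ ht₂ ht
    simpa only [hdiv ht₁, hdiv ht₂] using sub_lt_sub_left (hJ.strictMonoOn w hw ht₁ ht₂ ht) (B w w)
  · simpa [hJ.fderiv_energy hB, hr.ne'] using hcrit

section NehariProjection

variable (hJ : HasSuperlinearGradient J J') (hB : ∀ u v, B u v = B v u)
  (hs : ∀ w, 0 < B w w → 0 < s w ∧ fderiv ℝ (quadraticEnergy B J) (s w • w) (s w • w) = 0)
include hJ hB hs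

theorem isRayPeak_energy_of_form_pos (hw : 0 < B w w) :
    IsRayPeak (quadraticEnergy B J) w (s w) :=
  hJ.isRayPeak_energy hB (ne_zero_of_apply_self_pos hw) (hs w hw).1 (hs w hw).2

theorem hasFDerivAt_energy_smul (hw : 0 < B w w) :
    HasFDerivAt (fun v => quadraticEnergy B J (s v • v))
      (s w • fderiv ℝ (quadraticEnergy B J) (s w • w)) w := by
  have hform : Continuous fun v => B v v := by fun_prop
  have hstrict := hJ.hasStrictFDerivAt_energy hB
  rw [hJ.fderiv_energy hB]
  refine IsRayPeak.hasFDerivAt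
    (continuous_iff_continuousAt.2 fun u => (hstrict u).continuousAt) (hstrict _) ?_
  filter_upwards [hform.continuousAt.eventually_const_lt hw] with v hv
  exact hJ.isRayPeak_energy_of_form_pos hB hs hv

theorem forall_fderiv_energy_smul_eq_zero_iff (hw : B w w = 1) :
    (∀ z, B w z = 0 → fderiv ℝ (fun v => quadraticEnergy B J (s v • v)) w z = 0) ↔
      fderiv ℝ (quadraticEnergy B J) (s w • w) = 0 ∧ s w • w ≠ 0 := by
  have hpos : 0 < B w w := hw ▸ one_pos
  obtain ⟨hsw, hcrit⟩ := hs w hpos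
  have hw₀ : w ≠ 0 := ne_zero_of_apply_self_pos hpos
  rw [(hJ.hasFDerivAt_energy_smul hB hs hpos).fderiv]
  constructor
  · intro htangent
    refine ⟨?_, smul_ne_zero hsw.ne' hw₀⟩
    have hlin := eq_zero_of_ker_le_of_apply_eq_zero (φ := (B w).toLinearMap)
      (l := (fderiv ℝ (quadraticEnergy B J) (s w • w)).toLinearMap) hpos.ne'
      (fun z hz => by simpa [hsw.ne'] using htangent z hz) (by simpa [hsw.ne'] using hcrit)
    exact ContinuousLinearMap.coe_injective hlin
  · rintro ⟨hzero, -⟩ z -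
    simp [hzero]

theorem image_energy_nehari :
    quadraticEnergy B J '' {u | u ≠ 0 ∧ fderiv ℝ (quadraticEnergy B J) u u = 0} =
      (fun w => quadraticEnergy B J (s w • w)) '' {w | B w w = 1} := by
  ext c
  constructor
  · rintro ⟨u, ⟨hu, hcrit⟩, rfl⟩
    have hform : 0 < B u u := by
      have hcrit' : B u u - J' u u = 0 := by simpa [hJ.fderiv_energy hB] using hcrit
      linarith [hJ.apply_self_pos hu]
    have hsqrt : 0 < √(B u u) := Real.sqrt_pos.2 hform
    set w := (√(B u u))⁻¹ • u with hw_def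
    have hw : B w w = 1 := by
      simp only [hw_def, map_smul, smul_apply, smul_eq_mul]
      field_simp
      rw [Real.sq_sqrt hform.le]
    have hwu : √(B u u) • w = u := smul_inv_smul₀ hsqrt.ne' u
    have hpos : 0 < B w w := hw ▸ one_pos
    have hsw : s w = √(B u u) :=
      (hJ.isRayPeak_energy_of_form_pos hB hs hpos).unique
        (hJ.isRayPeak_energy hB (ne_zero_of_apply_self_pos hpos) hsqrt (by rwa [hwu]))
    exact ⟨w, hw, by simp only [hsw, hwu]⟩
  · rintro ⟨w, hw : B w w = 1, rfl⟩
    have hpos : 0 < B w w := hw ▸ one_pos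
    exact ⟨s w • w, ⟨smul_ne_zero (hs w hpos).1.ne' (ne_zero_of_apply_self_pos hpos),
      (hs w hpos).2⟩, rfl⟩

end NehariProjection

end HasSuperlinearGradient

end AbstractNehari

section LpPullback

open scoped ENNReal

variable {ι κ E 𝕜 : Type*} [NormedAddCommGroup E] [NormedField 𝕜] [NormedSpace 𝕜 E]
  {p : ℝ≥0∞} {π : ι → κ} {D : ℕ}

theorem sum_comp_le_of_encard_fiber_le [DecidableEq κ] (hπ : ∀ k, {i | π i = k}.encard ≤ D)
    {g : κ → ℝ} (hg : ∀ k, 0 ≤ g k) (s : Finset ι) :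
    ∑ i ∈ s, g (π i) ≤ D * ∑ k ∈ s.image π, g k := by
  classical
  rw [Finset.sum_comp, Finset.mul_sum]
  refine Finset.sum_le_sum fun k _ => ?_
  have hcard : {i ∈ s | π i = k}.card ≤ D := by
    have hsub : ((Finset.filter (fun i => π i = k) s : Finset ι) : Set ι) ⊆ {i | π i = k} := by
      intro i; simp
    exact_mod_cast (Set.encard_coe_eq_coe_finsetCard _ ▸ Set.encard_le_encard hsub).trans (hπ k)
  rw [nsmul_eq_mul]
  gcongr
  exact hg k

variable [Fact (1 ≤ p)]

theorem sum_rpow_norm_comp_le (hp : p ≠ ∞) (hπ : ∀ k, {i | π i = k}.encard ≤ D)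
    (u : lp (fun _ : κ => E) p) (s : Finset ι) :
    ∑ i ∈ s, ‖u (π i)‖ ^ p.toReal ≤ (D ^ (1 / p.toReal) * ‖u‖) ^ p.toReal := by
  classical
  have hp₀ : 0 < p.toReal := ENNReal.toReal_pos (zero_lt_one.trans_le Fact.out).ne' hp
  calc ∑ i ∈ s, ‖u (π i)‖ ^ p.toReal
      ≤ D * ∑ k ∈ s.image π, ‖u k‖ ^ p.toReal :=
        sum_comp_le_of_encard_fiber_le hπ (g := fun k => ‖u k‖ ^ p.toReal)
          (fun k => by positivity) s
    _ ≤ D * ‖u‖ ^ p.toReal := by gcongr; exact lp.sum_rpow_le_norm_rpow hp₀ u _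
    _ = (D ^ (1 / p.toReal) * ‖u‖) ^ p.toReal := by
        rw [Real.mul_rpow (by positivity) (norm_nonneg u), one_div,
          Real.rpow_inv_rpow (by positivity) hp₀.ne']

variable (𝕜) in
/-- The pullback `u ↦ u ∘ π` on `ℓᵖ`, for `p < ∞` and a map `π` with fibres of bounded size. -/
noncomputable def lpPullback (hp : p ≠ ∞) (hπ : ∀ k, {i | π i = k}.encard ≤ D) :
    lp (fun _ : κ => E) p →L[𝕜] lp (fun _ : ι => E) p :=
  LinearMap.mkContinuous
    { toFun u := ⟨fun i => u (π i), memℓp_gen' (sum_rpow_norm_comp_le hp hπ u)⟩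
      map_add' _ _ := rfl
      map_smul' _ _ := rfl }
    (D ^ (1 / p.toReal)) fun u =>
      lp.norm_le_of_forall_sum_le
        (ENNReal.toReal_pos (zero_lt_one.trans_le Fact.out).ne' hp) (by positivity)
        (sum_rpow_norm_comp_le hp hπ u)

@[simp]
theorem lpPullback_apply (hp : p ≠ ∞) (hπ : ∀ k, {i | π i = k}.encard ≤ D)
    (u : lp (fun _ : κ => E) p) (i : ι) : lpPullback 𝕜 hp hπ u i = u (π i) :=
  rfl

end LpPullback

section Nemytskii

open Filter Topology
open scoped ENNReal

variable {ι E F : Type*} [NormedAddCommGroup E] [NormedAddCommGroup F] {p : ℝ≥0∞}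

theorem eventually_cofinite_norm_lt [Fact (1 ≤ p)] (hp : p ≠ ∞) (u : lp (fun _ : ι => E) p) {ε : ℝ}
    (hε : 0 < ε) : ∀ᶠ i in cofinite, ‖u i‖ < ε := by
  have hp₀ : 0 < p.toReal := ENNReal.toReal_pos (zero_lt_one.trans_le Fact.out).ne' hp
  have hsum := (lp.hasSum_norm hp₀ u).summable.tendsto_cofinite_zero
  filter_upwards [hsum.eventually_lt_const (Real.rpow_pos_of_pos hε p.toReal)] with i hi
  exact (Real.rpow_lt_rpow_iff (norm_nonneg _) hε.le hp₀).1 hi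

/-- `f i t = o(t)` as `t → 0`, uniformly in `i`. -/
def IsUniformLittleO (f : ι → E → F) : Prop :=
  ∀ ε > 0, ∃ δ > 0, ∀ i t, ‖t‖ < δ → ‖f i t‖ ≤ ε * ‖t‖

namespace IsUniformLittleO

variable {f : ι → E → F} (hf : IsUniformLittleO f)

include hf in
theorem apply_zero (i : ι) : f i 0 = 0 := by
  obtain ⟨δ, hδ, h⟩ := hf 1 one_pos
  simpa using h i 0 (by simpa using hδ)

include hf in
theorem memℓp [Fact (1 ≤ p)] (hp : p ≠ ∞) (u : lp (fun _ : ι => E) p) :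
    Memℓp (fun i => f i (u i)) p := by
  have hp₀ : 0 < p.toReal := ENNReal.toReal_pos (zero_lt_one.trans_le Fact.out).ne' hp
  obtain ⟨δ, hδ, h⟩ := hf 1 one_pos
  refine memℓp_gen ((lp.hasSum_norm hp₀ u).summable.of_norm_bounded_eventually ?_)
  filter_upwards [eventually_cofinite_norm_lt hp u hδ] with i hi
  rw [Real.norm_of_nonneg (by positivity)]
  gcongr
  simpa only [one_mul] using h i (u i) hi

include hf in
theorem exists_forall_norm_sub_le [Fact (1 ≤ p)] (hp : p ≠ ∞) (hcont : ∀ i, Continuous (f i))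
    (u : lp (fun _ : ι => E) p) {ε : ℝ} (hε : 0 < ε) :
    ∃ r > 0, ∀ i t, ‖t - u i‖ < r → ‖f i t - f i (u i)‖ ≤ ε * (‖t‖ + ‖u i‖) := by
  obtain ⟨δ, hδ, hsmall⟩ := hf ε hε
  have hlarge : {i | ¬‖u i‖ < δ / 2}.Finite := eventually_cofinite_norm_lt hp u (half_pos hδ)
  have hlocal (i) (hi : ¬‖u i‖ < δ / 2) : ∀ᶠ r in 𝓝[>] (0 : ℝ), ∀ t, ‖t - u i‖ < r →
      ‖f i t - f i (u i)‖ ≤ ε * (‖t‖ + ‖u i‖) := by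
    have hui : 0 < ‖u i‖ := (half_pos hδ).trans_le (not_lt.1 hi)
    obtain ⟨r, hr, h⟩ := Metric.continuous_iff.1 (hcont i) (u i) _ (mul_pos hε hui)
    filter_upwards [Ioo_mem_nhdsGT hr] with r' hr' t ht
    rw [← dist_eq_norm] at ht ⊢
    refine (h t (ht.trans hr'.2)).le.trans ?_
    gcongr
    exact le_add_of_nonneg_left (norm_nonneg t)
  obtain ⟨r, hr, hr₀, hrδ⟩ :=
    (((eventually_all_finite hlarge).2 hlocal).and (Ioo_mem_nhdsGT (half_pos hδ))).exists
  refine ⟨r, hr₀, fun i t ht => ?_⟩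
  by_cases hi : ‖u i‖ < δ / 2
  · have htδ : ‖t‖ < δ := by linarith [norm_le_norm_add_norm_sub' t (u i)]
    calc ‖f i t - f i (u i)‖ ≤ ‖f i t‖ + ‖f i (u i)‖ := norm_sub_le _ _
      _ ≤ ε * ‖t‖ + ε * ‖u i‖ := add_le_add (hsmall i t htδ) (hsmall i (u i) (by linarith))
      _ = ε * (‖t‖ + ‖u i‖) := by ring
  · exact hr i hi t ht

/-- The superposition operator `u ↦ (f i (u i))ᵢ` on `ℓᵖ`, for `p < ∞`. -/
def nemytskii [Fact (1 ≤ p)] (hp : p ≠ ∞) (u : lp (fun _ : ι => E) p) :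
    lp (fun _ : ι => F) p :=
  ⟨fun i => f i (u i), hf.memℓp hp u⟩

variable [Fact (1 ≤ p)] (hp : p ≠ ∞)

@[simp]
theorem nemytskii_apply (u : lp (fun _ : ι => E) p) (i : ι) :
    hf.nemytskii hp u i = f i (u i) :=
  rfl

theorem isLittleO_nemytskii_sub (hcont : ∀ i, Continuous (f i)) (u : lp (fun _ : ι => E) p) :
    (fun v => hf.nemytskii hp v - hf.nemytskii hp u) =o[𝓝 u] fun v => ‖v‖ + ‖u‖ := by
  have hp₀ : p ≠ 0 := (zero_lt_one.trans_le Fact.out).ne'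
  refine Asymptotics.isLittleO_iff.2 fun ε hε => ?_
  obtain ⟨r, hr, hloc⟩ := hf.exists_forall_norm_sub_le hp hcont u hε
  filter_upwards [Metric.ball_mem_nhds u hr] with v hv
  have hle : ‖hf.nemytskii hp v - hf.nemytskii hp u‖ ≤ ‖ε • (lp.toNorm v + lp.toNorm u)‖ := by
    refine lp.norm_mono hp₀ fun i => (hloc i (v i) ?_).trans_eq ?_
    · exact (lp.norm_apply_le_norm hp₀ (v - u) i).trans_lt (mem_ball_iff_norm.1 hv)
    · change _ = ‖ε • (‖v i‖ + ‖u i‖)‖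
      rw [norm_smul, Real.norm_of_nonneg hε.le, Real.norm_of_nonneg (by positivity)]
  calc ‖hf.nemytskii hp v - hf.nemytskii hp u‖ ≤ ‖ε • (lp.toNorm v + lp.toNorm u)‖ := hle
    _ ≤ ε * (‖lp.toNorm v‖ + ‖lp.toNorm u‖) := by
        rw [norm_smul, Real.norm_of_nonneg hε.le]
        gcongr
        exact norm_add_le _ _
    _ = ε * ‖‖v‖ + ‖u‖‖ := by
        rw [lp.norm_toNorm, lp.norm_toNorm, Real.norm_of_nonneg (by positivity)]

theorem continuous_nemytskii (hcont : ∀ i, Continuous (f i)) :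
    Continuous (hf.nemytskii hp : lp (fun _ : ι => E) p → lp (fun _ : ι => F) p) := by
  refine continuous_iff_continuousAt.2 fun u => tendsto_sub_nhds_zero_iff.1 ?_
  have hbdd : (fun v : lp (fun _ : ι => E) p => ‖v‖ + ‖u‖) =O[𝓝 u] fun _ => (1 : ℝ) :=
    (continuous_norm.add continuous_const).continuousAt.isBigO_one ℝ
  exact (Asymptotics.isLittleO_one_iff ℝ).1
    ((hf.isLittleO_nemytskii_sub hp hcont u).trans_isBigO hbdd)

theorem isLittleO_nemytskii (hcont : ∀ i, Continuous (f i)) :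
    (hf.nemytskii hp : lp (fun _ : ι => E) p → lp (fun _ : ι => F) p) =o[𝓝 0] fun u => u := by
  have hzero : hf.nemytskii hp (0 : lp (fun _ : ι => E) p) = 0 :=
    lp.ext (funext fun i => hf.apply_zero i)
  refine Asymptotics.IsLittleO.of_norm_right ?_
  simpa [hzero] using hf.isLittleO_nemytskii_sub hp hcont 0

end IsUniformLittleO

end Nemytskii

section NemytskiiPotential

open Filter Set Topology
open scoped InnerProductSpace

variable {ι E : Type*} [NormedAddCommGroup E] [InnerProductSpace ℝ E]

/-- The functional `u ↦ ∑ᵢ F i (u i)` on `ℓ²`. -/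
noncomputable def nemytskiiPotential (F : ι → E → ℝ) (u : lp (fun _ : ι => E) 2) : ℝ :=
  ∑' i, F i (u i)

variable {F : ι → E → ℝ} {f : ι → E → E} (hf : IsUniformLittleO f)
  (hF : ∀ i t, HasFDerivAt (F i) (innerSL ℝ (f i t)) t) (hF₀ : ∀ i, F i 0 = 0)

include hF in
theorem exists_norm_sub_le_and_hasSum_sub (u v : lp (fun _ : ι => E) 2) :
    ∃ c : lp (fun _ : ι => E) 2, ‖c - u‖ ≤ ‖v - u‖ ∧
      HasSum (fun i => F i (v i) - F i (u i)) ⟪hf.nemytskii ENNReal.ofNat_ne_top c, v - u⟫_ℝ := by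
  have hmvt (i : ι) : ∃ t ∈ segment ℝ (u i) (v i),
      F i (v i) - F i (u i) = ⟪f i t, v i - u i⟫_ℝ := by
    simpa using domain_mvt (fun t _ => (hF i t).hasFDerivWithinAt) convex_univ
      (mem_univ (u i)) (mem_univ (v i))
  choose c hseg hmvt using hmvt
  have hle (i : ι) : ‖c i - u i‖ ≤ ‖v i - u i‖ := norm_sub_le_of_mem_segment (hseg i)
  let d : lp (fun _ : ι => E) 2 := ⟨fun i => c i - u i, (lp.memℓp (v - u)).mono' hle⟩
  have hc (i : ι) : (u + d) i = c i := add_sub_cancel (u i) (c i)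
  refine ⟨u + d, ?_, (lp.hasSum_inner _ (v - u)).congr_fun fun i => ?_⟩
  · rw [add_sub_cancel_left]
    exact lp.norm_mono two_ne_zero hle
  · rw [hmvt, hf.nemytskii_apply, hc]
    rfl

include hf hF hF₀ in
theorem summable_potential (u : lp (fun _ : ι => E) 2) : Summable fun i => F i (u i) := by
  obtain ⟨c, -, hsum⟩ := exists_norm_sub_le_and_hasSum_sub hf hF 0 u
  simpa [hF₀] using hsum.summable

include hF hF₀ in
theorem hasFDerivAt_nemytskiiPotential (hcont : ∀ i, Continuous (f i))
    (u : lp (fun _ : ι => E) 2) :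
    HasFDerivAt (nemytskiiPotential F)
      (innerSL ℝ (hf.nemytskii ENNReal.ofNat_ne_top u)) u := by
  set N := hf.nemytskii (p := 2) ENNReal.ofNat_ne_top
  have hN : Continuous N := hf.continuous_nemytskii _ hcont
  refine .of_isLittleO (Asymptotics.isLittleO_iff.2 fun ε hε => ?_)
  obtain ⟨δ, hδ, hNδ⟩ := Metric.continuous_iff.1 hN u ε hε
  filter_upwards [Metric.ball_mem_nhds u hδ] with v hv
  obtain ⟨c, hcu, hsum⟩ := exists_norm_sub_le_and_hasSum_sub hf hF u v
  have hincr : nemytskiiPotential F v - nemytskiiPotential F u = ⟪N c, v - u⟫_ℝ := by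
    rw [← hsum.tsum_eq]
    exact ((summable_potential hf hF hF₀ v).tsum_sub (summable_potential hf hF hF₀ u)).symm
  have hNc : ‖N c - N u‖ ≤ ε := by
    rw [← dist_eq_norm]
    refine (hNδ c ?_).le
    rw [dist_eq_norm]
    exact hcu.trans_lt (mem_ball_iff_norm.1 hv)
  rw [hincr, innerSL_apply_apply, ← inner_sub_left]
  exact (norm_inner_le_norm _ _).trans (by gcongr)

include hF hF₀ in
theorem hasStrictFDerivAt_nemytskiiPotential (hcont : ∀ i, Continuous (f i))
    (u : lp (fun _ : ι => E) 2) :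
    HasStrictFDerivAt (nemytskiiPotential F)
      (innerSL ℝ (hf.nemytskii ENNReal.ofNat_ne_top u)) u :=
  hasStrictFDerivAt_of_hasFDerivAt_of_continuousAt
    (.of_forall (hasFDerivAt_nemytskiiPotential hf hF hF₀ hcont))
    ((innerSL ℝ).continuous.comp (hf.continuous_nemytskii _ hcont)).continuousAt

theorem strictMonoOn_inner_nemytskii_div
    (hmono : ∀ i, ∀ w ≠ 0, StrictMonoOn (fun t : ℝ => ⟪f i (t • w), w⟫_ℝ / t) (Ioi 0))
    {w : lp (fun _ : ι => E) 2} (hw : w ≠ 0) :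
    StrictMonoOn (fun t : ℝ => ⟪hf.nemytskii ENNReal.ofNat_ne_top (t • w), w⟫_ℝ / t) (Ioi 0) := by
  obtain ⟨j, hj⟩ : ∃ j, w j ≠ 0 := by
    by_contra! h
    exact hw (lp.ext (funext h))
  have hsum (t : ℝ) : HasSum (fun i => ⟪f i (t • w i), w i⟫_ℝ / t)
      (⟪hf.nemytskii ENNReal.ofNat_ne_top (t • w), w⟫_ℝ / t) :=
    (lp.hasSum_inner (𝕜 := ℝ) (hf.nemytskii ENNReal.ofNat_ne_top (t • w)) w).div_const t
  intro t₁ ht₁ t₂ ht₂ ht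
  have hlt (i : ι) (hi : w i ≠ 0) : ⟪f i (t₁ • w i), w i⟫_ℝ / t₁ < ⟪f i (t₂ • w i), w i⟫_ℝ / t₂ :=
    hmono i (w i) hi ht₁ ht₂ ht
  refine hasSum_lt (fun i => ?_) (hlt j hj) (hsum t₁) (hsum t₂)
  rcases eq_or_ne (w i) 0 with hi | hi
  · simp [hi]
  · exact (hlt i hi).le

include hF hF₀ in
theorem hasSuperlinearGradient_nemytskiiPotential (hcont : ∀ i, Continuous (f i))
    (hmono : ∀ i, ∀ w ≠ 0, StrictMonoOn (fun t : ℝ => ⟪f i (t • w), w⟫_ℝ / t) (Ioi 0)) :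
    HasSuperlinearGradient (nemytskiiPotential F)
      (fun u => innerSL ℝ (hf.nemytskii ENNReal.ofNat_ne_top u)) where
  hasStrictFDerivAt := hasStrictFDerivAt_nemytskiiPotential hf hF hF₀ hcont
  isLittleO := ((innerSL ℝ).isBigO_comp _ _).trans_isLittleO (hf.isLittleO_nemytskii _ hcont)
  strictMonoOn _ hw := strictMonoOn_inner_nemytskii_div hf hmono hw

end NemytskiiPotential

section RealNonlinearity

open Filter Set Topology
open scoped InnerProductSpace

theorem isUniformLittleO_of_forall_ne_zero {ι E F : Type*} [NormedAddCommGroup E]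
    [NormedAddCommGroup F] [(𝓝[≠] (0 : E)).NeBot] {f : ι → E → F}
    (hcont : ∀ i, ContinuousAt (f i) 0)
    (h : ∀ ε > 0, ∃ δ > 0, ∀ i t, t ≠ 0 → ‖t‖ < δ → ‖f i t‖ ≤ ε * ‖t‖) : IsUniformLittleO f := by
  have hzero (i : ι) : f i 0 = 0 := by
    obtain ⟨δ, hδ, hle⟩ := h 1 one_pos
    have hnorm : Tendsto (fun t : E => 1 * ‖t‖) (𝓝[≠] 0) (𝓝 0) :=
      ((continuous_const.mul continuous_norm).tendsto' 0 0 (by simp)).mono_left nhdsWithin_le_nhds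
    refine tendsto_nhds_unique ((hcont i).tendsto.mono_left nhdsWithin_le_nhds)
      (squeeze_zero_norm' ?_ hnorm)
    filter_upwards [self_mem_nhdsWithin,
      mem_nhdsWithin_of_mem_nhds (Metric.ball_mem_nhds (0 : E) hδ)] with t ht htδ
    exact hle i t ht (mem_ball_zero_iff.1 htδ)
  intro ε hε
  obtain ⟨δ, hδ, hle⟩ := h ε hε
  refine ⟨δ, hδ, fun i t ht => ?_⟩
  rcases eq_or_ne t 0 with rfl | ht₀
  · simp [hzero]
  · exact hle i t ht₀ ht

variable {f F : ℝ → ℝ}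

theorem hasFDerivAt_innerSL_of_eq_integral (hf : Continuous f)
    (hF : ∀ t, F t = ∫ s in (0 : ℝ)..t, f s) (t : ℝ) : HasFDerivAt F (innerSL ℝ (f t)) t := by
  rw [funext hF]
  exact (hf.integral_hasStrictDerivAt 0 t).hasDerivAt.hasFDerivAt.congr_fderiv (by ext; simp)

theorem strictMonoOn_inner_smul_div (hneg : StrictMonoOn (fun t => f t / |t|) (Iio 0))
    (hpos : StrictMonoOn (fun t => f t / |t|) (Ioi 0)) {w : ℝ} (hw : w ≠ 0) :
    StrictMonoOn (fun t : ℝ => ⟪f (t • w), w⟫_ℝ / t) (Ioi 0) := by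
  have hquot {t : ℝ} (ht : 0 < t) : ⟪f (t • w), w⟫_ℝ / t = |w| * w * (f (t * w) / |t * w|) := by
    have hw' : |w| ≠ 0 := abs_ne_zero.2 hw
    rw [abs_mul, abs_of_pos ht, smul_eq_mul]
    change w * f (t * w) / t = _
    field_simp
  intro t₁ (ht₁ : 0 < t₁) t₂ (ht₂ : 0 < t₂) ht
  simp only [hquot ht₁, hquot ht₂]
  rcases hw.lt_or_gt with hw | hw
  · exact mul_lt_mul_of_neg_left (hneg (mul_neg_of_pos_of_neg ht₂ hw)
      (mul_neg_of_pos_of_neg ht₁ hw) (mul_lt_mul_of_neg_right ht hw))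
      (mul_neg_of_pos_of_neg (abs_pos.2 hw.ne) hw)
  · exact mul_lt_mul_of_pos_left (hpos (mul_pos ht₁ hw) (mul_pos ht₂ hw)
      (mul_lt_mul_of_pos_right ht hw)) (by positivity)

end RealNonlinearity

section GraphForm

variable {Vtx : Type*} {adj : Vtx → Vtx → Prop} {D : ℕ} {Vp : Vtx → ℝ} {C : ℝ}

/-- The directed edges of `adj`, indexed by their source, in the shape of the sums in `iprodH`. -/
abbrev DirectedEdge (adj : Vtx → Vtx → Prop) := Σ x, {y // adj x y}

theorem encard_source_fiber_le (hdeg : ∀ x, {y | adj x y}.encard ≤ D) (x : Vtx) :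
    {e : DirectedEdge adj | e.1 = x}.encard ≤ D := by
  refine (Set.encard_le_encard_of_injOn (t := {y | adj x y}) (f := fun e => e.2.1) ?_ ?_).trans
    (hdeg x)
  · rintro e rfl
    exact e.2.2
  · rintro e rfl e' hfiber h
    exact Sigma.subtype_ext hfiber.symm h

theorem encard_target_fiber_le (hsym : ∀ x y, adj x y → adj y x)
    (hdeg : ∀ x, {y | adj x y}.encard ≤ D) (y : Vtx) :
    {e : DirectedEdge adj | e.2.1 = y}.encard ≤ D := by
  refine (Set.encard_le_encard_of_injOn (t := {x | adj y x}) (f := fun e => e.1) ?_ ?_).trans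
    (hdeg y)
  · rintro e rfl
    exact hsym _ _ e.2.2
  · rintro e rfl e' hfiber h
    exact Sigma.subtype_ext h hfiber.symm

/-- The discrete gradient `u ↦ (u y - u x)` over the directed edges `x → y`, as an operator
on `ℓ²`. -/
noncomputable def graphGradient (hsym : ∀ x y, adj x y → adj y x)
    (hdeg : ∀ x, {y | adj x y}.encard ≤ D) :
    H1 Vtx →L[ℝ] lp (fun _ : DirectedEdge adj => ℝ) 2 :=
  lpPullback ℝ (p := 2) ENNReal.ofNat_ne_top (encard_target_fiber_le hsym hdeg) -
    lpPullback ℝ (p := 2) ENNReal.ofNat_ne_top (encard_source_fiber_le hdeg)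

/-- Multiplication by a bounded potential on `ℓ²`. -/
noncomputable def potentialMul (hV : ∀ x, |Vp x| ≤ C) : H1 Vtx →L[ℝ] H1 Vtx :=
  lp.mapCLM 2 (fun x => Vp x • ContinuousLinearMap.id ℝ ℝ) (abs_nonneg C) fun x =>
    (norm_smul_le _ _).trans (by simpa using (hV x).trans (le_abs_self C))

/-- The inner product `⟨u, v⟩` of `iprodH` as a bounded bilinear form on `ℓ²`. -/
noncomputable def energyForm (hsym : ∀ x y, adj x y → adj y x)
    (hdeg : ∀ x, {y | adj x y}.encard ≤ D) (hV : ∀ x, |Vp x| ≤ C) :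
    H1 Vtx →L[ℝ] H1 Vtx →L[ℝ] ℝ :=
  (1 / 2 : ℝ) • (isBoundedBilinearMap_inner (𝕜 := ℝ)).toContinuousLinearMap.bilinearComp
      (graphGradient hsym hdeg) (graphGradient hsym hdeg) +
    (isBoundedBilinearMap_inner (𝕜 := ℝ)).toContinuousLinearMap.bilinearComp
      (potentialMul hV) (.id ℝ _)

theorem energyForm_apply (hsym : ∀ x y, adj x y → adj y x) (hdeg : ∀ x, {y | adj x y}.encard ≤ D)
    (hV : ∀ x, |Vp x| ≤ C) (u v : H1 Vtx) :
    energyForm hsym hdeg hV u v = iprodH adj Vp u v := by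
  have hedge := lp.hasSum_inner (𝕜 := ℝ) (graphGradient hsym hdeg u) (graphGradient hsym hdeg v)
  have hgrad := hedge.sigma fun x => (hedge.summable.sigma_factor x).hasSum
  have hpot := lp.hasSum_inner (𝕜 := ℝ) (potentialMul hV u) v
  refine ((hgrad.mul_left (1 / 2)).add hpot).tsum_eq.symm.trans (tsum_congr fun x => ?_)
  simp only [graphGradient, potentialMul, gammaProd, sub_apply, lp.coeFn_sub, Pi.sub_apply,
    lpPullback_apply, lp.mapCLM_apply_coe, smul_apply, ContinuousLinearMap.id_apply, smul_eq_mul,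
    RCLike.inner_apply, Real.ringHom_apply, mul_comm (v _ - _), mul_comm (v _) (Vp _ * _)]

theorem iprodH_comm (u v : H1 Vtx) : iprodH adj Vp u v = iprodH adj Vp v u := by
  simp only [iprodH, gammaProd, mul_comm (v _ - _), mul_right_comm (Vp _) (v _)]

theorem nrmH_eq_one_iff {w : H1 Vtx} : nrmH adj Vp w = 1 ↔ iprodH adj Vp w w = 1 := by
  simp only [nrmH, nrmV, Real.sqrt_eq_one, iprodH, gradSq, sq, mul_assoc]

theorem PhiF_eq_quadraticEnergy (hsym : ∀ x y, adj x y → adj y x)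
    (hdeg : ∀ x, {y | adj x y}.encard ≤ D) (hV : ∀ x, |Vp x| ≤ C) (F : Vtx → ℝ → ℝ) :
    PhiF adj Vp F = quadraticEnergy (energyForm hsym hdeg hV) (nemytskiiPotential F) := by
  ext u
  simp only [PhiF, quadraticEnergy, nemytskiiPotential, energyForm_apply, iprodH, gradSq, sq,
    mul_assoc]

theorem ne_zero_of_iprodH_self_pos {w : H1 Vtx} (hw : 0 < iprodH adj Vp w w) : w ≠ 0 := by
  rintro rfl
  simp [iprodH, gammaProd] at hw

end GraphForm

theorem stmt15_general {Vtx : Type*} (adj : Vtx → Vtx → Prop) (D : ℕ)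
    (hsym : ∀ x y, adj x y → adj y x) (hdeg : ∀ x, {y | adj x y}.encard ≤ D)
    (Vp : Vtx → ℝ) (C : ℝ) (hV : ∀ x, |Vp x| ≤ C)
    (f : Vtx → ℝ → ℝ) (hcont : ∀ x, Continuous (f x))
    (hsmall : ∀ ε > 0, ∃ δ > 0, ∀ x t, t ≠ 0 → |t| < δ → |f x t| ≤ ε * |t|)
    (hmono : ∀ x, StrictMonoOn (fun t => f x t / |t|) (Set.Iio 0) ∧
      StrictMonoOn (fun t => f x t / |t|) (Set.Ioi 0))
    (F : Vtx → ℝ → ℝ) (hF : ∀ x t, F x t = ∫ s in (0 : ℝ)..t, f x s)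
    (sw : H1 Vtx → ℝ)
    (hsw : ∀ w : H1 Vtx, 0 < iprodH adj Vp w w → 0 < sw w ∧
      fderiv ℝ (PhiF adj Vp F) (sw w • w) (sw w • w) = 0) :
    (∀ w : H1 Vtx, nrmH adj Vp w = 1 →
      ((∀ z : H1 Vtx, iprodH adj Vp w z = 0 →
          fderiv ℝ (fun v : H1 Vtx => PhiF adj Vp F (sw v • v)) w z = 0) ↔
        (fderiv ℝ (PhiF adj Vp F) (sw w • w) = 0 ∧ sw w • w ≠ 0))) ∧
    PhiF adj Vp F '' Nehari adj Vp F =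
      (fun w : H1 Vtx => PhiF adj Vp F (sw w • w)) '' {w : H1 Vtx | nrmH adj Vp w = 1} := by
  have hf : IsUniformLittleO f :=
    isUniformLittleO_of_forall_ne_zero (fun x => (hcont x).continuousAt) hsmall
  have hJ := hasSuperlinearGradient_nemytskiiPotential hf
    (fun x t => hasFDerivAt_innerSL_of_eq_integral (hcont x) (hF x) t) (fun x => by simp [hF])
    hcont fun x _ hw => strictMonoOn_inner_smul_div (hmono x).1 (hmono x).2 hw
  have hB (u v : H1 Vtx) : energyForm hsym hdeg hV u v = energyForm hsym hdeg hV v u := by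
    simp only [energyForm_apply, iprodH_comm u v]
  simp only [Nehari, nrmH_eq_one_iff, PhiF_eq_quadraticEnergy hsym hdeg hV,
    ← energyForm_apply hsym hdeg hV] at hsw ⊢
  exact ⟨fun w hw => hJ.forall_fderiv_energy_smul_eq_zero_iff hB hsw hw,
    hJ.image_energy_nehari hB hsw⟩

/-- Proposition 3.7 (iii): `w ∈ S` is a critical point of `Ψ` iff `m(w)` is a nontrivial
critical point of `Φ`; moreover `inf_N Φ = inf_S Ψ`. -/
theorem stmt15
    {Vtx : Type*} (adj : Vtx → Vtx → Prop) (D : ℕ)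
    (hsym : ∀ x y, adj x y → adj y x)
    (hirr : ∀ x, ¬ adj x x)
    (hfin : ∀ x, {y | adj x y}.Finite)
    (hdeg : ∀ x, {y | adj x y}.ncard ≤ D)
    (Vp : Vtx → ℝ) (C1 C2 : ℝ) (hC1 : 0 < C1)
    (hVbd : ∀ x, C1 ≤ Vp x ∧ Vp x ≤ C2)
    (f : Vtx → ℝ → ℝ) (hcont : ∀ x, Continuous (f x))
    (a q : ℝ) (ha : 0 < a) (hq : 2 < q)
    (hgrowth : ∀ x t, |f x t| ≤ a * (|t| + |t| ^ (q - 1)))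
    (hsmall : ∀ ε > 0, ∃ δ > 0, ∀ x t, t ≠ 0 → |t| < δ → |f x t| ≤ ε * |t|)
    (hmono : ∀ x, StrictMonoOn (fun t => f x t / |t|) (Set.Iio 0) ∧
             StrictMonoOn (fun t => f x t / |t|) (Set.Ioi 0))
    (F : Vtx → ℝ → ℝ) (hF : ∀ x t, F x t = ∫ s in (0:ℝ)..t, f x s)
    (hsuper : ∀ M : ℝ, ∃ R > 0, ∀ x t, R ≤ |t| → M ≤ F x t / t ^ 2)
    (sw : H1 Vtx → ℝ)
    (hsw : ∀ w : H1 Vtx, w ≠ 0 → 0 < sw w ∧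
      fderiv ℝ (PhiF adj Vp F) (sw w • w) (sw w • w) = 0 ∧
      ∀ s : ℝ, 0 < s → fderiv ℝ (PhiF adj Vp F) (s • w) (s • w) = 0 → s = sw w)
    :
    (∀ w : H1 Vtx, nrmH adj Vp w = 1 →
      ((∀ z : H1 Vtx, iprodH adj Vp w z = 0 →
          fderiv ℝ (fun v : H1 Vtx => PhiF adj Vp F (sw v • v)) w z = 0) ↔
        (fderiv ℝ (PhiF adj Vp F) (sw w • w) = 0 ∧ sw w • w ≠ 0))) ∧
    sInf (PhiF adj Vp F '' Nehari adj Vp F) =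
      sInf ((fun w : H1 Vtx => PhiF adj Vp F (sw w • w)) ''
        {w : H1 Vtx | nrmH adj Vp w = 1}) :=
  (stmt15_general adj D hsym (fun x => (hfin x).cast_ncard_eq ▸ mod_cast hdeg x) Vp C2
    (fun x => abs_le.2 ⟨by linarith [hVbd x], (hVbd x).2⟩) f hcont hsmall hmono F hF sw fun w hw =>
      (hsw w (ne_zero_of_iprodH_self_pos hw)).imp_right And.left).imp_right (congrArg sInf)
end
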